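/- Let R be a weakly orthogonal TRS, t a (possibly infinite) term, and U a set of pairwise non-overlapping redexes of t having a (strongly convergent) complete development. If u ∈ U is a Y-redex of t, then the complete development of U and the complete development of U∖{u} result in the same term. -/

import Mathlib

open PFunctor

universe u

variable (F : Type) (ar : F → ℕ)

/-- The polynomial functor whose M-type is the type of possibly infinite
terms over the signature `F` (with arities `ar`) and variables `ℕ`:
a node is either a function symbol (with `ar f` children) or a variable
(with no children). -/
abbrev TermPF : PFunctor.{0} :=
  ⟨F ⊕ ℕ, fun a => Fin (Sum.elim ar (fun _ => 0) a)⟩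

/-- Possibly infinite terms (coinductive trees) over signature `F`. -/
def ITerm : Type := (TermPF F ar).M

/-- Finite terms over signature `F`, used for left-hand sides of rules. -/
inductive FTerm : Type
  | var : ℕ → FTerm
  | app : (f : F) → (Fin (ar f) → FTerm) → FTerm

variable {F ar}

/-- Embedding of finite terms into possibly infinite terms. -/
def FTerm.toI : FTerm F ar → ITerm F ar
  | .var x => M.mk ⟨Sum.inr x, fun i => i.elim0⟩
  | .app f c => M.mk ⟨Sum.inl f, fun i => (c i).toI⟩

/-- Application of a substitution `σ` to a possibly infinite term: every
variable node `x` is replaced by the term `σ x` (corecursively; the marker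
records whether we are already inside a substituted term). -/
def substI (σ : ℕ → ITerm F ar) (t : ITerm F ar) : ITerm F ar :=
  M.corec (fun s : Bool × ITerm F ar =>
    if s.1 then ⟨(M.dest s.2).1, fun i => (true, (M.dest s.2).2 i)⟩
    else
      match M.dest s.2 with
      | ⟨Sum.inl f, cs⟩ => ⟨Sum.inl f, fun i => (false, cs i)⟩
      | ⟨Sum.inr x, _⟩ => ⟨(M.dest (σ x)).1, fun i => (true, (M.dest (σ x)).2 i)⟩)
    (false, t)

/-- The subterm of a term at a position (a list of argument indices),
if the position exists. -/
def subAt? : List ℕ → ITerm F ar → Option (ITerm F ar)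
  | [], t => some t
  | i :: p, t =>
      if h : i < Sum.elim ar (fun _ => 0) (M.dest t).1 then
        subAt? p ((M.dest t).2 ⟨i, h⟩)
      else none

/-- The symbol (function symbol or variable) at a position of a term. -/
def symAt? (t : ITerm F ar) (p : List ℕ) : Option (F ⊕ ℕ) :=
  (subAt? p t).map fun u => (M.dest u).1

/-- `replaceAt t p u` is the term obtained from `t` by replacing the subterm
at position `p` by `u` (defined corecursively). -/
def replaceAt (t : ITerm F ar) (p : List ℕ) (u : ITerm F ar) : ITerm F ar :=
  M.corec (fun s : (List ℕ × ITerm F ar) ⊕ ITerm F ar =>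
    match s with
    | Sum.inl ([], _) => ⟨(M.dest u).1, fun i => Sum.inr ((M.dest u).2 i)⟩
    | Sum.inl (i :: p', v) =>
        ⟨(M.dest v).1, fun j =>
          if (j : ℕ) = i then Sum.inl (p', (M.dest v).2 j)
          else Sum.inr ((M.dest v).2 j)⟩
    | Sum.inr v => ⟨(M.dest v).1, fun i => Sum.inr ((M.dest v).2 i)⟩)
    (Sum.inl (p, t))

/-- The list of variable occurrences of a finite term (from left to right). -/
def FTerm.varsList : FTerm F ar → List ℕ
  | .var x => [x]
  | .app _ c => (List.ofFn fun i => (c i).varsList).flatten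

/-- The pattern positions of a finite term: the positions carrying a function
symbol (non-variable positions). -/
def FTerm.patPos : FTerm F ar → Set (List ℕ)
  | .var _ => ∅
  | .app f c => {[]} ∪ ⋃ i : Fin (ar f), (fun q => (i : ℕ) :: q) '' (c i).patPos

/-- The positions of the variable `x` in a finite term. -/
def FTerm.varPos : FTerm F ar → ℕ → Set (List ℕ)
  | .var y, x => if y = x then {[]} else ∅
  | .app f c, x => ⋃ i : Fin (ar f), (fun q => (i : ℕ) :: q) '' (c i).varPos x

variable (F ar)

/-- An infinitary rewrite rule: a finite left-hand side that is not a
variable, and a possibly infinite right-hand side all of whose variables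
occur in the left-hand side. -/
structure Rule : Type where
  lhs : FTerm F ar
  rhs : ITerm F ar
  lhs_nonvar : ∀ x, lhs ≠ .var x
  varcond : ∀ x p, symAt? rhs p = some (Sum.inr x) → x ∈ lhs.varsList

variable {F ar}

/-- A rule is left-linear if no variable occurs twice in its left-hand side. -/
def Rule.LeftLinear (ρ : Rule F ar) : Prop := ρ.lhs.varsList.Nodup

/-- A rule is collapsing if its right-hand side is a variable. -/
def Rule.Collapsing (ρ : Rule F ar) : Prop := ∃ x, (M.dest ρ.rhs).1 = Sum.inr x

variable (F ar)

/-- A (candidate) redex: a position, a rule and a matching substitution. -/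
structure Rdx : Type where
  pos : List ℕ
  rule : Rule F ar
  sub : ℕ → ITerm F ar

variable {F ar}

/-- `u.In R t`: `u` is a redex of the term `t` with respect to the rewrite
system `R`: its rule belongs to `R` and the subterm of `t` at `u.pos` is the
corresponding instance of the left-hand side. -/
def Rdx.In (u : Rdx F ar) (R : Set (Rule F ar)) (t : ITerm F ar) : Prop :=
  u.rule ∈ R ∧ subAt? u.pos t = some (substI u.sub u.rule.lhs.toI)

/-- The result of contracting the redex `u` in the term `t`. -/
def Rdx.result (u : Rdx F ar) (t : ITerm F ar) : ITerm F ar :=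
  replaceAt t u.pos (substI u.sub u.rule.rhs)

/-- Two redexes overlap if their patterns share a position. -/
def Rdx.Overlaps (u v : Rdx F ar) : Prop :=
  ∃ q, (∃ r ∈ u.rule.lhs.patPos, q = u.pos ++ r) ∧
    (∃ r ∈ v.rule.lhs.patPos, q = v.pos ++ r)

/-- A weakly orthogonal iTRS: all rules are left-linear and all critical
pairs are trivial, i.e. contracting either of two overlapping redexes of a
term always yields the same result. -/
def WeaklyOrthogonal (R : Set (Rule F ar)) : Prop :=
  (∀ ρ ∈ R, ρ.LeftLinear) ∧
  ∀ (t : ITerm F ar) (u v : Rdx F ar),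
    u.In R t → v.In R t → u.Overlaps v → u.result t = v.result t

/-- The overlap relation on the redexes of a fixed term `t`. -/
def OverlapIn {F : Type} {ar : F → ℕ} (R : Set (Rule F ar)) (t : ITerm F ar)
    (u v : Rdx F ar) : Prop :=
  u.In R t ∧ v.In R t ∧ u.Overlaps v

/-- Two positions are disjoint if neither is a prefix of the other. -/
def DisjPos (p q : List ℕ) : Prop := ¬ p <+: q ∧ ¬ q <+: p

/-- `u` is a Y-redex of `t`: `u` is a redex of `t` that is connected by chains
of pattern overlaps (within `t`) to two redexes `v₁`, `v₂` of `t` at disjoint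
positions. -/
def YRedex {F : Type} {ar : F → ℕ} (R : Set (Rule F ar)) (t : ITerm F ar)
    (u : Rdx F ar) : Prop :=
  u.In R t ∧ ∃ v₁ v₂ : Rdx F ar, v₁.In R t ∧ v₂.In R t ∧
    Relation.ReflTransGen (OverlapIn R t) u v₁ ∧
    Relation.ReflTransGen (OverlapIn R t) u v₂ ∧
    DisjPos v₁.pos v₂.pos

/-- `agreeTo d t s`: the terms `t` and `s` carry the same symbols at all
positions of depth `< d`. -/
def agreeTo {F : Type} {ar : F → ℕ} (d : ℕ) (t s : ITerm F ar) : Prop :=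
  ∀ p : List ℕ, p.length < d → symAt? t p = symAt? s p

/-- `mapPos ρ p q`: the residual positions of a position `q` after contracting
a redex with rule `ρ` at position `p` (for redexes not overlapping the
contracted one): positions not below `p` stay put, and a position passing
through the occurrence of a variable `x` in the left-hand side is moved to
the corresponding occurrences of `x` in the right-hand side. -/
def mapPos {F : Type} {ar : F → ℕ} (ρ : Rule F ar) (p q : List ℕ) :
    Set (List ℕ) :=
  {q' | (¬ p <+: q ∧ q' = q) ∨
    ∃ x v w v', q = p ++ v ++ w ∧ v ∈ ρ.lhs.varPos x ∧
      symAt? ρ.rhs v' = some (Sum.inr x) ∧ q' = p ++ v' ++ w}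

/-- The residuals of a set `V` of redexes after contracting the redex `u`,
in the resulting term `t'`. -/
def residuals {F : Type} {ar : F → ℕ} (R : Set (Rule F ar)) (u : Rdx F ar)
    (V : Set (Rdx F ar)) (t' : ITerm F ar) : Set (Rdx F ar) :=
  {v' | ∃ v ∈ V, v'.rule = v.rule ∧ v'.pos ∈ mapPos u.rule u.pos v.pos ∧
    v'.In R t'}

/-- `CompDev R t U s`: there is a (strongly convergent) complete development
of the set `U` of redexes of `t` with result `s`: an `ω`-sequence of steps,
each contracting a residual of `U` (the sets `Us n` track the remaining
residuals; a trivial stage is allowed only when no residuals remain, so that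
finite complete developments are included), such that the depths of the
remaining residuals tend to infinity (strong convergence and completeness:
in the limit no residual remains at any finite depth) and the terms converge
to `s`. -/
def CompDev {F : Type} {ar : F → ℕ} (R : Set (Rule F ar)) (t : ITerm F ar)
    (U : Set (Rdx F ar)) (s : ITerm F ar) : Prop :=
  ∃ (g : ℕ → ITerm F ar) (Us : ℕ → Set (Rdx F ar)),
    g 0 = t ∧ Us 0 = U ∧
    (∀ n, (Us n = ∅ ∧ g (n + 1) = g n ∧ Us (n + 1) = ∅) ∨
      ∃ u ∈ Us n, u.In R (g n) ∧ g (n + 1) = u.result (g n) ∧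
        Us (n + 1) = residuals R u (Us n \ {u}) (g (n + 1))) ∧
    (∀ d : ℕ, ∃ N, ∀ n ≥ N, ∀ u ∈ Us n, d ≤ u.pos.length) ∧
    (∀ d : ℕ, ∃ N, ∀ n ≥ N, agreeTo d (g n) s)

/-!
A complete development of `U` is read off from `t` without performing it: walk down from the root
of `t`, and on meeting a redex of `U` continue in the right-hand side of its rule, returning to `t`
when a variable of that right-hand side is met. The walks ending in a symbol `a` are those of an
automaton whose silent moves are the crossings between `t` and right-hand sides. Contracting a
redex of `U` yields a weakly bisimilar automaton, so the automaton describes the result.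

A Y-redex `u` has overlap chains to redexes at disjoint positions. By weak orthogonality they all
contract to the same term, so contracting `u` changes nothing. It does not even move the redexes
inside `u` that avoid the chains: the chains survive when such a redex is replaced by a fresh
variable, and then contracting `u` must leave that variable where it is. So the innermost redex of
`U` overlapping the chains has no residual, changes nothing when contracted, and can be dropped.
Dropping them one after another removes from both `U` and `U \ {u}` all redexes overlapping
the chains, and what remains of the two sets is the same.
-/

/-! ### Symbols and subterms -/

namespace ITerm

/-- The term with root symbol `a` and immediate subterms `c`. -/
def node (a : F ⊕ ℕ) (c : Fin (Sum.elim ar (fun _ => 0) a) → ITerm F ar) : ITerm F ar :=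
  M.mk ⟨a, c⟩

theorem exists_eq_node (t : ITerm F ar) : ∃ a c, t = node a c :=
  ⟨(M.dest t).1, (M.dest t).2, (M.mk_dest t).symm⟩

theorem eq_app_or_eq_var (t : ITerm F ar) :
    (∃ f c, t = node (Sum.inl f) c) ∨ ∃ x c, t = node (Sum.inr x) c := by
  obtain ⟨f | x, c, rfl⟩ := exists_eq_node t
  · exact Or.inl ⟨f, c, rfl⟩
  · exact Or.inr ⟨x, c, rfl⟩

theorem dest_node (a : F ⊕ ℕ) (c : Fin (Sum.elim ar (fun _ => 0) a) → ITerm F ar) :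
    M.dest (node a c) = (⟨a, c⟩ : (TermPF F ar) (ITerm F ar)) :=
  M.dest_mk _

theorem eq_node_of_dest {t : ITerm F ar} {a : F ⊕ ℕ}
    {c : Fin (Sum.elim ar (fun _ => 0) a) → ITerm F ar}
    (h : M.dest t = (⟨a, c⟩ : (TermPF F ar) (ITerm F ar))) : t = node a c :=
  (M.mk_dest t).symm.trans (congrArg M.mk h)

theorem subAt?_node_cons (a : F ⊕ ℕ) (c : Fin (Sum.elim ar (fun _ => 0) a) → ITerm F ar)
    (i : ℕ) (p : List ℕ) :
    subAt? (i :: p) (node a c) =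
      if hi : i < Sum.elim ar (fun _ => 0) a then subAt? p (c ⟨i, hi⟩) else none := by
  rw [subAt?, dest_node]

theorem symAt?_nil (t : ITerm F ar) : symAt? t [] = some (M.dest t).1 :=
  rfl

theorem symAt?_node_nil (a : F ⊕ ℕ) (c : Fin (Sum.elim ar (fun _ => 0) a) → ITerm F ar) :
    symAt? (node a c) [] = some a := by
  rw [symAt?_nil, dest_node]

theorem symAt?_node_cons (a : F ⊕ ℕ) (c : Fin (Sum.elim ar (fun _ => 0) a) → ITerm F ar)
    (i : ℕ) (p : List ℕ) :
    symAt? (node a c) (i :: p) =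
      if hi : i < Sum.elim ar (fun _ => 0) a then symAt? (c ⟨i, hi⟩) p else none := by
  rw [symAt?, subAt?_node_cons]
  split <;> rfl

theorem symAt?_var_cons (x : ℕ)
    (c : Fin (Sum.elim ar (fun _ => 0) (Sum.inr x : F ⊕ ℕ)) → ITerm F ar)
    (i : ℕ) (p : List ℕ) : symAt? (node (Sum.inr x) c) (i :: p) = none := by
  rw [symAt?_node_cons]
  exact dif_neg (Nat.not_lt_zero _)

theorem ext_symAt? {s t : ITerm F ar} (h : ∀ p, symAt? s p = symAt? t p) : s = t := by
  refine M.bisim (P := TermPF F ar) (fun s t : ITerm F ar => ∀ p, symAt? s p = symAt? t p)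
    ?_ s t h
  intro s t h
  obtain ⟨a, c, rfl⟩ := exists_eq_node s
  obtain ⟨b, e, rfl⟩ := exists_eq_node t
  obtain rfl : a = b := by simpa only [symAt?_node_nil, Option.some.injEq] using h []
  refine ⟨a, c, e, dest_node a c, dest_node a e, fun i p => ?_⟩
  have hp := h (i :: p)
  rwa [symAt?_node_cons, symAt?_node_cons, dif_pos i.2, dif_pos i.2] at hp

theorem subAt?_append (p q : List ℕ) (t : ITerm F ar) :
    subAt? (p ++ q) t = (subAt? p t).bind (subAt? q) := by
  induction p generalizing t with
  | nil => rfl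
  | cons i p ih =>
    obtain ⟨a, c, rfl⟩ := exists_eq_node t
    rw [List.cons_append, subAt?_node_cons, subAt?_node_cons]
    split
    · exact ih _
    · rfl

theorem symAt?_append {p : List ℕ} {t s : ITerm F ar} (h : subAt? p t = some s) (q : List ℕ) :
    symAt? t (p ++ q) = symAt? s q := by
  rw [symAt?, subAt?_append, h]
  rfl

theorem symAt?_eq_symAt?_nil {p : List ℕ} {t s : ITerm F ar} (h : subAt? p t = some s) :
    symAt? t p = symAt? s [] := by
  simpa only [List.append_nil] using symAt?_append h []

theorem isSome_symAt? (t : ITerm F ar) (p : List ℕ) :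
    (symAt? t p).isSome = (subAt? p t).isSome :=
  Option.isSome_map

theorem exists_subAt?_eq_some {t : ITerm F ar} {p : List ℕ} (h : (symAt? t p).isSome) :
    ∃ s, subAt? p t = some s :=
  Option.isSome_iff_exists.1 (isSome_symAt? t p ▸ h)

theorem isSome_symAt?_of_append {t : ITerm F ar} {p q : List ℕ}
    (h : (symAt? t (p ++ q)).isSome) : (symAt? t p).isSome := by
  rw [isSome_symAt?, subAt?_append] at h
  rw [isSome_symAt?]
  exact Option.isSome_of_isSome_bind h

theorem isSome_symAt?_concat_iff {t : ITerm F ar} {p : List ℕ} {i : ℕ} :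
    (symAt? t (p ++ [i])).isSome ↔
      ∃ a, symAt? t p = some a ∧ i < Sum.elim ar (fun _ => 0) a := by
  cases hs : subAt? p t with
  | none =>
    have hp : symAt? t p = none := by rw [symAt?, hs]; rfl
    have hpi : symAt? t (p ++ [i]) = none := by rw [symAt?, subAt?_append, hs]; rfl
    simp [hp, hpi]
  | some s =>
    obtain ⟨a, c, rfl⟩ := exists_eq_node s
    rw [symAt?_append hs, symAt?_eq_symAt?_nil hs, symAt?_node_nil, symAt?_node_cons]
    by_cases hi : i < Sum.elim ar (fun _ => 0) a
    · simp [hi, symAt?_nil]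
    · simp [hi]

theorem isSome_symAt?_concat_congr {s t : ITerm F ar} {p q : List ℕ}
    (h : symAt? s p = symAt? t q) (i : ℕ) :
    (symAt? s (p ++ [i])).isSome ↔ (symAt? t (q ++ [i])).isSome := by
  rw [isSome_symAt?_concat_iff, isSome_symAt?_concat_iff, h]

theorem exists_symAt?_eq_inl_of_append {t : ITerm F ar} {p q : List ℕ}
    (h : (symAt? t (p ++ q)).isSome) (hq : q ≠ []) : ∃ f, symAt? t p = some (Sum.inl f) := by
  obtain ⟨i, q, rfl⟩ := List.exists_cons_of_ne_nil hq
  rw [List.append_cons] at h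
  obtain ⟨f | x, ha, hi⟩ := isSome_symAt?_concat_iff.1 (isSome_symAt?_of_append h)
  · exact ⟨f, ha⟩
  · exact absurd hi (Nat.not_lt_zero _)

theorem eq_nil_of_symAt?_eq_inr {t : ITerm F ar} {p q : List ℕ} {x : ℕ} {a : F ⊕ ℕ}
    (hp : symAt? t p = some (Sum.inr x)) (h : symAt? t (p ++ q) = some a) : q = [] := by
  by_contra hq
  obtain ⟨f, hf⟩ := exists_symAt?_eq_inl_of_append (Option.isSome_of_eq_some h) hq
  simp [hp] at hf

/-! ### Substitution and replacement -/

theorem corec_eq_node {X : Type} {g : X → (TermPF F ar) X} {x : X} {a : F ⊕ ℕ}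
    {k : Fin (Sum.elim ar (fun _ => 0) a) → X} (h : g x = ⟨a, k⟩) :
    (M.corec g x : ITerm F ar) = node a fun i => M.corec g (k i) :=
  eq_node_of_dest ((M.dest_corec g x).trans (by rw [h]; rfl))

theorem corec_eq_self {X : Type} (g : X → (TermPF F ar) X) (e : ITerm F ar → X)
    (hg : ∀ v, g (e v) = ⟨(M.dest v).1, fun i => e ((M.dest v).2 i)⟩) (v : ITerm F ar) :
    M.corec g (e v) = v := by
  have hcorec : (fun v => M.corec g (e v)) = M.corec (F := TermPF F ar) M.dest :=
    M.corec_unique (P := TermPF F ar) M.dest _ fun v => (M.dest_corec _ _).trans (by rw [hg v]; rfl)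
  have hid : id = M.corec (F := TermPF F ar) M.dest :=
    M.corec_unique (P := TermPF F ar) M.dest _ fun _ => rfl
  exact congrFun (hcorec.trans hid.symm) v

theorem substI_app (σ : ℕ → ITerm F ar) (f : F)
    (c : Fin (Sum.elim ar (fun _ => 0) (Sum.inl f : F ⊕ ℕ)) → ITerm F ar) :
    substI σ (node (Sum.inl f) c) = node (Sum.inl f) fun i => substI σ (c i) :=
  corec_eq_node ((if_neg Bool.false_ne_true).trans (by dsimp only; rw [dest_node]))

theorem substI_var (σ : ℕ → ITerm F ar) (x : ℕ)
    (c : Fin (Sum.elim ar (fun _ => 0) (Sum.inr x : F ⊕ ℕ)) → ITerm F ar) :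
    substI σ (node (Sum.inr x) c) = σ x := by
  refine (corec_eq_node (a := (M.dest (σ x)).1) (k := fun i => (true, (M.dest (σ x)).2 i))
    ((if_neg Bool.false_ne_true).trans (by dsimp only; rw [dest_node]; rfl))).trans ?_
  refine (congrArg _ (funext fun i => ?_)).trans (eq_node_of_dest rfl).symm
  exact corec_eq_self _ (fun v => (true, v)) (fun v => if_pos rfl) _

theorem symAt?_substI_of_eq_inl (σ : ℕ → ITerm F ar) {t : ITerm F ar} {p : List ℕ} {f : F}
    (h : symAt? t p = some (Sum.inl f)) : symAt? (substI σ t) p = some (Sum.inl f) := by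
  induction p generalizing t with
  | nil =>
    rcases eq_app_or_eq_var t with ⟨g, c, rfl⟩ | ⟨x, c, rfl⟩
    · rwa [substI_app, symAt?_node_nil, ← symAt?_node_nil _ c]
    · simp [symAt?_node_nil] at h
  | cons i p ih =>
    rcases eq_app_or_eq_var t with ⟨g, c, rfl⟩ | ⟨x, c, rfl⟩
    · rw [symAt?_node_cons] at h
      rw [substI_app, symAt?_node_cons]
      split at h
      case isTrue hi => rw [dif_pos hi]; exact ih h
      case isFalse => simp at h
    · simp [symAt?_var_cons] at h

theorem subAt?_substI_of_eq_inr (σ : ℕ → ITerm F ar) {t : ITerm F ar} {p : List ℕ} {x : ℕ}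
    (h : symAt? t p = some (Sum.inr x)) : subAt? p (substI σ t) = some (σ x) := by
  induction p generalizing t with
  | nil =>
    rcases eq_app_or_eq_var t with ⟨f, c, rfl⟩ | ⟨y, c, rfl⟩
    · simp [symAt?_node_nil] at h
    · obtain rfl : y = x := by simpa [symAt?_node_nil] using h
      rw [substI_var, subAt?]
  | cons i p ih =>
    rcases eq_app_or_eq_var t with ⟨f, c, rfl⟩ | ⟨y, c, rfl⟩
    · rw [symAt?_node_cons] at h
      rw [substI_app, subAt?_node_cons]
      split at h
      case isTrue hi => rw [dif_pos hi]; exact ih h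
      case isFalse => simp at h
    · simp [symAt?_var_cons] at h

theorem symAt?_eq_inl_or_exists_inr_prefix {σ : ℕ → ITerm F ar} {t : ITerm F ar} {p : List ℕ}
    (h : (symAt? (substI σ t) p).isSome) :
    (∃ f, symAt? t p = some (Sum.inl f)) ∨
      ∃ x v w, p = v ++ w ∧ symAt? t v = some (Sum.inr x) := by
  induction p generalizing t with
  | nil =>
    rcases eq_app_or_eq_var t with ⟨f, c, rfl⟩ | ⟨x, c, rfl⟩
    · exact Or.inl ⟨f, symAt?_node_nil _ _⟩
    · exact Or.inr ⟨x, [], [], rfl, symAt?_node_nil _ _⟩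
  | cons i p ih =>
    rcases eq_app_or_eq_var t with ⟨f, c, rfl⟩ | ⟨x, c, rfl⟩
    · rw [substI_app, symAt?_node_cons] at h
      split at h
      case isTrue hi =>
        rcases ih h with ⟨g, hg⟩ | ⟨x, v, w, rfl, hv⟩
        · exact Or.inl ⟨g, by rw [symAt?_node_cons, dif_pos hi, hg]⟩
        · exact Or.inr ⟨x, i :: v, w, rfl, by rw [symAt?_node_cons, dif_pos hi, hv]⟩
      case isFalse => simp at h
    · exact Or.inr ⟨x, [], i :: p, rfl, symAt?_node_nil _ _⟩

theorem replaceAt_nil (t u : ITerm F ar) : replaceAt t [] u = u := by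
  refine (corec_eq_node rfl).trans ?_
  refine (congrArg _ (funext fun i => ?_)).trans (eq_node_of_dest rfl).symm
  exact corec_eq_self _ Sum.inr (fun v => rfl) _

theorem replaceAt_cons (u : ITerm F ar) (a : F ⊕ ℕ)
    (c : Fin (Sum.elim ar (fun _ => 0) a) → ITerm F ar) (i : ℕ) (p : List ℕ) :
    replaceAt (node a c) (i :: p) u =
      node a fun j => if (j : ℕ) = i then replaceAt (c j) p u else c j := by
  refine (corec_eq_node
    (k := fun j => if (j : ℕ) = i then Sum.inl (p, c j) else Sum.inr (c j))
    (by dsimp only; rw [dest_node])).trans (congrArg _ (funext fun j => ?_))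
  by_cases hj : (j : ℕ) = i
  · rw [if_pos hj, if_pos hj]
    rfl
  · rw [if_neg hj, if_neg hj]
    exact corec_eq_self _ Sum.inr (fun v => rfl) _

theorem subAt?_replaceAt_self {t : ITerm F ar} {p : List ℕ} (h : (symAt? t p).isSome)
    (u : ITerm F ar) : subAt? p (replaceAt t p u) = some u := by
  induction p generalizing t with
  | nil => rw [replaceAt_nil, subAt?]
  | cons i p ih =>
    obtain ⟨a, c, rfl⟩ := exists_eq_node t
    rw [symAt?_node_cons] at h
    rw [replaceAt_cons, subAt?_node_cons]
    split at h
    case isTrue hi =>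
      rw [dif_pos hi, if_pos rfl]
      exact ih h
    case isFalse => simp at h

theorem symAt?_replaceAt_of_not_prefix (t u : ITerm F ar) {p q : List ℕ} (h : ¬ p <+: q) :
    symAt? (replaceAt t p u) q = symAt? t q := by
  induction p generalizing t q with
  | nil => simp at h
  | cons i p ih =>
    obtain ⟨a, c, rfl⟩ := exists_eq_node t
    rw [replaceAt_cons]
    cases q with
    | nil => rw [symAt?_node_nil, symAt?_node_nil]
    | cons j q =>
      rw [symAt?_node_cons, symAt?_node_cons]
      split
      case isTrue hj =>
        by_cases hij : j = i
        · subst hij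
          rw [if_pos rfl]
          exact ih _ (by simpa using h)
        · rw [if_neg (show ¬ ((⟨j, hj⟩ : Fin _) : ℕ) = i from hij)]
      case isFalse => rfl

end ITerm

/-! ### Patterns -/

namespace FTerm

theorem toI_var (x : ℕ) :
    (FTerm.var x : FTerm F ar).toI = ITerm.node (Sum.inr x) fun i => i.elim0 :=
  rfl

theorem toI_app (f : F) (c : Fin (ar f) → FTerm F ar) :
    (FTerm.app f c).toI = ITerm.node (Sum.inl f) fun i => (c i).toI :=
  rfl

theorem symAt?_toI_var_nil (x : ℕ) :
    symAt? (FTerm.var x : FTerm F ar).toI [] = some (Sum.inr x) :=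
  ITerm.symAt?_node_nil _ _

theorem symAt?_toI_var_cons (x i : ℕ) (p : List ℕ) :
    symAt? (FTerm.var x : FTerm F ar).toI (i :: p) = none :=
  ITerm.symAt?_var_cons _ _ _ _

theorem symAt?_toI_app_nil (f : F) (c : Fin (ar f) → FTerm F ar) :
    symAt? (FTerm.app f c).toI [] = some (Sum.inl f) :=
  ITerm.symAt?_node_nil _ _

theorem symAt?_toI_app_cons (f : F) (c : Fin (ar f) → FTerm F ar) (i : ℕ) (p : List ℕ) :
    symAt? (FTerm.app f c).toI (i :: p) =
      if hi : i < ar f then symAt? (c ⟨i, hi⟩).toI p else none := by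
  rw [toI_app, ITerm.symAt?_node_cons]
  rfl

theorem mem_patPos_iff {l : FTerm F ar} {r : List ℕ} :
    r ∈ l.patPos ↔ ∃ f, symAt? l.toI r = some (Sum.inl f) := by
  induction l generalizing r with
  | var x => cases r <;> simp [patPos, symAt?_toI_var_nil, symAt?_toI_var_cons]
  | app f c ih =>
    cases r with
    | nil => simp [patPos, symAt?_toI_app_nil]
    | cons i r =>
      simp only [patPos, symAt?_toI_app_cons, Set.mem_union, Set.mem_singleton_iff,
        reduceCtorEq, false_or, Set.mem_iUnion, Set.mem_image, List.cons.injEq]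
      constructor
      · rintro ⟨j, q, hq, rfl, rfl⟩
        simpa using (ih j).1 hq
      · rintro ⟨g, hg⟩
        split at hg
        case isTrue hi => exact ⟨⟨i, hi⟩, r, (ih _).2 ⟨g, hg⟩, rfl, rfl⟩
        case isFalse => simp at hg

theorem mem_varPos_iff {l : FTerm F ar} {x : ℕ} {r : List ℕ} :
    r ∈ l.varPos x ↔ symAt? l.toI r = some (Sum.inr x) := by
  induction l generalizing r with
  | var y =>
    rw [varPos]
    cases r with
    | nil =>
      rw [symAt?_toI_var_nil]
      split <;> simp_all
    | cons i r =>
      rw [symAt?_toI_var_cons]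
      split <;> simp
  | app f c ih =>
    cases r with
    | nil => simp [varPos, symAt?_toI_app_nil]
    | cons i r =>
      simp only [varPos, symAt?_toI_app_cons, Set.mem_iUnion, Set.mem_image, List.cons.injEq]
      constructor
      · rintro ⟨j, q, hq, rfl, rfl⟩
        simpa using (ih j).1 hq
      · intro hg
        split at hg
        case isTrue hi => exact ⟨⟨i, hi⟩, r, (ih _).2 hg, rfl, rfl⟩
        case isFalse => simp at hg

theorem mem_varsList_iff {l : FTerm F ar} {x : ℕ} :
    x ∈ l.varsList ↔ (l.varPos x).Nonempty := by
  induction l with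
  | var y =>
    rw [varsList, varPos, List.mem_singleton]
    split <;> simp_all [eq_comm]
  | app f c ih =>
    simp [varsList, varPos, List.mem_ofFn, ← ih]

theorem varPos_subsingleton {l : FTerm F ar} (hl : l.varsList.Nodup) (x : ℕ) :
    (l.varPos x).Subsingleton := by
  induction l with
  | var y =>
    rw [varPos]
    split
    · exact Set.subsingleton_singleton
    · exact Set.subsingleton_empty
  | app f c ih =>
    simp only [varsList, List.nodup_flatten, List.forall_mem_ofFn_iff, List.pairwise_ofFn] at hl
    intro r hr r' hr'
    simp only [varPos, Set.mem_iUnion, Set.mem_image] at hr hr'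
    obtain ⟨i, q, hq, rfl⟩ := hr
    obtain ⟨j, q', hq', rfl⟩ := hr'
    have hi := mem_varsList_iff.2 ⟨q, hq⟩
    have hj := mem_varsList_iff.2 ⟨q', hq'⟩
    rcases lt_trichotomy i j with hij | rfl | hij
    · exact absurd hj (hl.2 hij hi)
    · rw [ih i (hl.1 i) hq hq']
    · exact absurd hi (hl.2 hij hj)

theorem finite_patPos (l : FTerm F ar) : l.patPos.Finite := by
  induction l with
  | var _ => exact Set.finite_empty
  | app f c ih => exact (Set.finite_singleton _).union (Set.finite_iUnion fun i => (ih i).image _)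

theorem eq_substI_of_forall_symAt? {l : FTerm F ar} {t : ITerm F ar} {σ : ℕ → ITerm F ar}
    (hsym : ∀ r f, symAt? l.toI r = some (Sum.inl f) → symAt? t r = some (Sum.inl f))
    (hσ : ∀ r x s, symAt? l.toI r = some (Sum.inr x) → subAt? r t = some s → σ x = s) :
    t = substI σ l.toI := by
  induction l generalizing t with
  | var x => rw [toI_var, ITerm.substI_var, hσ [] x t (symAt?_toI_var_nil x) rfl]
  | app f c ih =>
    obtain ⟨a, e, rfl⟩ := ITerm.exists_eq_node t
    have h0 := hsym [] f (symAt?_toI_app_nil f c)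
    rw [ITerm.symAt?_node_nil] at h0
    obtain rfl : a = Sum.inl f := by simpa using h0
    rw [toI_app, ITerm.substI_app]
    congr 1
    funext i
    have hi : (i : ℕ) < ar f := i.2
    apply ih i
    · intro r g hr
      have := hsym (i :: r) g (by rw [symAt?_toI_app_cons, dif_pos hi]; exact hr)
      rwa [ITerm.symAt?_node_cons, dif_pos i.2] at this
    · intro r x s hr hs
      refine hσ (i :: r) x s (by rw [symAt?_toI_app_cons, dif_pos hi]; exact hr) ?_
      rwa [ITerm.subAt?_node_cons, dif_pos i.2]

theorem exists_eq_substI_of_nodup {l : FTerm F ar} (hl : l.varsList.Nodup) {t : ITerm F ar}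
    (hsym : ∀ r f, symAt? l.toI r = some (Sum.inl f) → symAt? t r = some (Sum.inl f)) :
    ∃ σ, t = substI σ l.toI := by
  have hσ (x : ℕ) : ∃ s, ∀ r s', symAt? l.toI r = some (Sum.inr x) → subAt? r t = some s' →
      s = s' := by
    by_cases h : ∃ r s, symAt? l.toI r = some (Sum.inr x) ∧ subAt? r t = some s
    · obtain ⟨r, s, hr, hs⟩ := h
      refine ⟨s, fun r' s' hr' hs' => ?_⟩
      obtain rfl := varPos_subsingleton hl x (mem_varPos_iff.2 hr) (mem_varPos_iff.2 hr')
      exact Option.some.inj (hs.symm.trans hs')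
    · exact ⟨t, fun r s' hr hs => absurd ⟨r, s', hr, hs⟩ h⟩
  choose σ hσ using hσ
  exact ⟨σ, eq_substI_of_forall_symAt? hsym fun r x s => hσ x r s⟩

end FTerm

namespace ITerm

theorem symAt?_replaceAt_var {t : ITerm F ar} {p : List ℕ} (h : (symAt? t p).isSome) (x : ℕ) :
    symAt? (replaceAt t p (FTerm.var x).toI) p = some (Sum.inr x) := by
  rw [symAt?_eq_symAt?_nil (subAt?_replaceAt_self h _), FTerm.symAt?_toI_var_nil]

theorem eq_of_symAt?_replaceAt_var {t : ITerm F ar} {p q : List ℕ} (ht : (symAt? t p).isSome)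
    (hq : ∀ x, symAt? (replaceAt t p (FTerm.var x).toI) q = some (Sum.inr x)) : q = p := by
  by_cases hpq : p <+: q
  · obtain ⟨w, rfl⟩ := hpq
    rw [eq_nil_of_symAt?_eq_inr (symAt?_replaceAt_var ht 0) (hq 0), List.append_nil]
  · have h₀ := hq 0
    have h₁ := hq 1
    rw [symAt?_replaceAt_of_not_prefix _ _ hpq] at h₀ h₁
    simp [h₀] at h₁

end ITerm

namespace Rule

variable (ρ : Rule F ar)

theorem exists_symAt?_lhs_nil : ∃ f, symAt? ρ.lhs.toI [] = some (Sum.inl f) := by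
  rcases h : ρ.lhs with x | ⟨f, c⟩
  · exact absurd h (ρ.lhs_nonvar x)
  · exact ⟨f, FTerm.symAt?_toI_app_nil f c⟩

theorem nil_mem_patPos : [] ∈ ρ.lhs.patPos :=
  FTerm.mem_patPos_iff.2 ρ.exists_symAt?_lhs_nil

theorem nonempty_varPos_lhs {x : ℕ} {p : List ℕ} (h : symAt? ρ.rhs p = some (Sum.inr x)) :
    (ρ.lhs.varPos x).Nonempty :=
  FTerm.mem_varsList_iff.1 (ρ.varcond x p h)

end Rule

/-! ### Residual positions -/

section MapPos

variable {ρ : Rule F ar} {p q q' r : List ℕ}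

theorem mapPos_of_not_prefix (ρ : Rule F ar) (h : ¬ p <+: q) : mapPos ρ p q = {q} := by
  ext q'
  refine ⟨?_, fun hq' => Or.inl ⟨h, hq'⟩⟩
  rintro (⟨-, rfl⟩ | ⟨_, v, w, _, rfl, -⟩)
  · rfl
  · exact absurd (by simp) h

theorem notMem_mapPos_self : q' ∉ mapPos ρ p p := by
  rintro (⟨h, -⟩ | ⟨x, v, w, v', h, hv, -, -⟩)
  · exact h List.prefix_rfl
  · obtain ⟨rfl, rfl⟩ : v = [] ∧ w = [] := by simpa [List.append_assoc] using h
    obtain ⟨f, hf⟩ := ρ.exists_symAt?_lhs_nil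
    simp [FTerm.mem_varPos_iff.1 hv] at hf

theorem append_mem_mapPos (h : q' ∈ mapPos ρ p q) (hr : p <+: q ++ r → p <+: q) :
    q' ++ r ∈ mapPos ρ p (q ++ r) := by
  rcases h with ⟨hn, rfl⟩ | ⟨x, v, w, v', rfl, hv, hv', rfl⟩
  · exact Or.inl ⟨fun h => hn (hr h), rfl⟩
  · exact Or.inr ⟨x, v, w ++ r, v', by simp, hv, hv', by simp⟩

theorem append_mem_mapPos_of_symAt?_eq_inr {x : ℕ} {v' : List ℕ} (hr : r ∈ ρ.lhs.varPos x)
    (hv' : symAt? ρ.rhs v' = some (Sum.inr x)) : p ++ v' ∈ mapPos ρ p (p ++ r) :=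
  Or.inr ⟨x, r, [], v', by simp, hr, hv', by simp⟩

theorem append_notMem_mapPos_of_symAt?_eq_inl {f : F} {v : List ℕ}
    (h : symAt? ρ.rhs v = some (Sum.inl f)) : p ++ v ∉ mapPos ρ p q := by
  rintro (⟨hn, rfl⟩ | ⟨x, _, w, v', rfl, -, hv', he⟩)
  · exact hn (List.prefix_append _ _)
  · rw [List.append_assoc, List.append_cancel_left_eq] at he
    subst he
    obtain rfl := ITerm.eq_nil_of_symAt?_eq_inr hv' h
    simp [hv'] at h

theorem eq_of_mem_mapPos (hρ : ρ.LeftLinear) {q₁ q₂ : List ℕ} (h₁ : q' ∈ mapPos ρ p q₁)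
    (h₂ : q' ∈ mapPos ρ p q₂) : q₁ = q₂ := by
  rcases h₁ with ⟨hn₁, rfl⟩ | ⟨x, v₁, w₁, v₁', rfl, hv₁, hv₁', rfl⟩
  · rcases h₂ with ⟨-, rfl⟩ | ⟨y, v₂, w₂, v₂', rfl, -, -, rfl⟩
    · rfl
    · exact absurd (by simp) hn₁
  · rcases h₂ with ⟨hn₂, rfl⟩ | ⟨y, v₂, w₂, v₂', rfl, hv₂, hv₂', h⟩
    · exact absurd (by simp) hn₂
    · rw [List.append_assoc, List.append_assoc, List.append_cancel_left_eq] at h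
      obtain ⟨rfl, rfl⟩ : v₁' = v₂' ∧ w₁ = w₂ := by
        rcases List.append_eq_append_iff.1 h with ⟨c, rfl, rfl⟩ | ⟨c, rfl, rfl⟩
        · simp [ITerm.eq_nil_of_symAt?_eq_inr hv₁' hv₂']
        · simp [ITerm.eq_nil_of_symAt?_eq_inr hv₂' hv₁']
      obtain rfl : x = y := by simpa [hv₁'] using hv₂'
      rw [FTerm.varPos_subsingleton hρ x hv₁ hv₂]

end MapPos

namespace Rdx

variable {R : Set (Rule F ar)} {u : Rdx F ar} {t : ITerm F ar}

theorem In.symAt?_append_of_eq_inl (h : u.In R t) {r : List ℕ} {f : F}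
    (hr : symAt? u.rule.lhs.toI r = some (Sum.inl f)) :
    symAt? t (u.pos ++ r) = some (Sum.inl f) := by
  rw [ITerm.symAt?_append h.2, ITerm.symAt?_substI_of_eq_inl _ hr]

theorem symAt?_result_of_not_prefix (u : Rdx F ar) (t : ITerm F ar) {q : List ℕ}
    (h : ¬ u.pos <+: q) : symAt? (u.result t) q = symAt? t q :=
  ITerm.symAt?_replaceAt_of_not_prefix _ _ h

theorem In.subAt?_result (h : u.In R t) :
    subAt? u.pos (u.result t) = some (substI u.sub u.rule.rhs) :=
  ITerm.subAt?_replaceAt_self (by simp [ITerm.isSome_symAt?, h.2]) _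

theorem In.symAt?_result_append_of_eq_inl (h : u.In R t) {v : List ℕ} {f : F}
    (hv : symAt? u.rule.rhs v = some (Sum.inl f)) :
    symAt? (u.result t) (u.pos ++ v) = some (Sum.inl f) := by
  rw [ITerm.symAt?_append h.subAt?_result, ITerm.symAt?_substI_of_eq_inl _ hv]

theorem In.symAt?_result_of_mem_mapPos (h : u.In R t) {q q' : List ℕ}
    (hq : q' ∈ mapPos u.rule u.pos q) : symAt? (u.result t) q' = symAt? t q := by
  rcases hq with ⟨hn, rfl⟩ | ⟨x, v, w, v', rfl, hv, hv', rfl⟩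
  · exact u.symAt?_result_of_not_prefix t hn
  · rw [List.append_assoc, List.append_assoc, ITerm.symAt?_append h.subAt?_result,
      ITerm.symAt?_append h.2, ITerm.symAt?_append (ITerm.subAt?_substI_of_eq_inr _ hv'),
      ITerm.symAt?_append (ITerm.subAt?_substI_of_eq_inr _ (FTerm.mem_varPos_iff.1 hv))]

theorem In.mem_mapPos_or_eq_append (h : u.In R t) {q : List ℕ}
    (hq : (symAt? (u.result t) q).isSome) :
    (∃ q₀, q ∈ mapPos u.rule u.pos q₀) ∨
      ∃ v f, q = u.pos ++ v ∧ symAt? u.rule.rhs v = some (Sum.inl f) := by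
  by_cases hp : u.pos <+: q
  · obtain ⟨v, rfl⟩ := hp
    rw [ITerm.symAt?_append h.subAt?_result] at hq
    rcases ITerm.symAt?_eq_inl_or_exists_inr_prefix hq with ⟨f, hf⟩ | ⟨x, v', w, rfl, hx⟩
    · exact Or.inr ⟨v, f, rfl, hf⟩
    · obtain ⟨r, hr⟩ := u.rule.nonempty_varPos_lhs hx
      exact Or.inl ⟨_, Or.inr ⟨x, r, w, v', rfl, hr, hx, (List.append_assoc _ _ _).symm⟩⟩
  · exact Or.inl ⟨q, Or.inl ⟨hp, rfl⟩⟩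

end Rdx


/-! ### Redex occurrences -/

variable (F ar) in
/-- A redex occurrence: a position together with a rule. It is a redex without its matching
substitution, which the term determines when the rule is left-linear. -/
@[ext]
structure RedexOcc : Type where
  pos : List ℕ
  rule : Rule F ar

/-- The occurrence of a redex. -/
def Rdx.toOcc (u : Rdx F ar) : RedexOcc F ar :=
  ⟨u.pos, u.rule⟩

namespace RedexOcc

/-- `m.In R t`: the rule of `m` belongs to `R`, and the function symbols of its left-hand side
occur in `t` at the position of `m`. -/
def In (m : RedexOcc F ar) (R : Set (Rule F ar)) (t : ITerm F ar) : Prop :=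
  m.rule ∈ R ∧ ∀ r f, symAt? m.rule.lhs.toI r = some (Sum.inl f) →
    symAt? t (m.pos ++ r) = some (Sum.inl f)

/-- Two redex occurrences overlap if their patterns share a position. -/
def Overlaps (m n : RedexOcc F ar) : Prop :=
  ∃ r ∈ m.rule.lhs.patPos, ∃ r' ∈ n.rule.lhs.patPos, m.pos ++ r = n.pos ++ r'

variable {R : Set (Rule F ar)} {t : ITerm F ar} {m n : RedexOcc F ar} {r : List ℕ}

theorem Overlaps.symm (h : m.Overlaps n) : n.Overlaps m := by
  obtain ⟨r, hr, r', hr', h⟩ := h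
  exact ⟨r', hr', r, hr, h.symm⟩

theorem overlaps_of_mem_patPos (hr : r ∈ m.rule.lhs.patPos) (h : n.pos = m.pos ++ r) :
    m.Overlaps n :=
  ⟨r, hr, [], n.rule.nil_mem_patPos, by rw [h, List.append_nil]⟩

theorem overlaps_of_pos_eq (h : m.pos = n.pos) : m.Overlaps n :=
  overlaps_of_mem_patPos m.rule.nil_mem_patPos (by rw [h, List.append_nil])

theorem prefix_or_eq_of_not_overlaps (hmn : ¬ m.Overlaps n)
    (hr : (symAt? m.rule.lhs.toI r).isSome) (h : n.pos <+: m.pos ++ r) :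
    n.pos <+: m.pos ∨ n.pos = m.pos ++ r := by
  obtain ⟨w, hw⟩ := h
  rcases List.append_eq_append_iff.1 hw with ⟨c, hc, -⟩ | ⟨c, hc, rfl⟩
  · exact Or.inl ⟨c, hc.symm⟩
  · rcases eq_or_ne w [] with rfl | hne
    · exact Or.inr (by simpa using hc)
    · have hcpat := FTerm.mem_patPos_iff.2 (ITerm.exists_symAt?_eq_inl_of_append hr hne)
      exact absurd (overlaps_of_mem_patPos hcpat hc) hmn

theorem prefix_of_not_overlaps (hmn : ¬ m.Overlaps n) (hr : r ∈ m.rule.lhs.patPos)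
    (h : n.pos <+: m.pos ++ r) : n.pos <+: m.pos := by
  obtain ⟨f, hf⟩ := FTerm.mem_patPos_iff.1 hr
  exact (prefix_or_eq_of_not_overlaps hmn (Option.isSome_of_eq_some hf) h).resolve_right
    fun he => hmn (overlaps_of_mem_patPos hr he)

theorem In.isSome_symAt? (h : m.In R t) : (symAt? t m.pos).isSome := by
  obtain ⟨f, hf⟩ := m.rule.exists_symAt?_lhs_nil
  simpa using Option.isSome_of_eq_some (h.2 [] f hf)

theorem In.exists_rdx (hR : ∀ ρ ∈ R, ρ.LeftLinear) (h : m.In R t) :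
    ∃ u : Rdx F ar, u.In R t ∧ u.toOcc = m := by
  obtain ⟨s, hs⟩ := ITerm.exists_subAt?_eq_some h.isSome_symAt?
  obtain ⟨σ, rfl⟩ := FTerm.exists_eq_substI_of_nodup (t := s) (hR _ h.1) fun r f hr => by
    rw [← ITerm.symAt?_append hs, h.2 r f hr]
  exact ⟨⟨m.pos, m.rule, σ⟩, ⟨h.1, hs⟩, rfl⟩

end RedexOcc

theorem Rdx.overlaps_iff {u v : Rdx F ar} : u.Overlaps v ↔ u.toOcc.Overlaps v.toOcc := by
  constructor
  · rintro ⟨q, ⟨r, hr, rfl⟩, r', hr', h⟩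
    exact ⟨r, hr, r', hr', h⟩
  · rintro ⟨r, hr, r', hr', h⟩
    exact ⟨_, ⟨r, hr, rfl⟩, r', hr', h⟩

theorem Rdx.In.toOcc {R : Set (Rule F ar)} {u : Rdx F ar} {t : ITerm F ar} (h : u.In R t) :
    u.toOcc.In R t :=
  ⟨h.1, fun _ _ => h.symAt?_append_of_eq_inl⟩

/-- A marking of `t`: a set of pairwise non-overlapping redex occurrences of `t`. -/
structure IsMarking (R : Set (Rule F ar)) (t : ITerm F ar) (D : Set (RedexOcc F ar)) :
    Prop where
  mem_in : ∀ m ∈ D, m.In R t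
  eq_of_overlaps : ∀ m ∈ D, ∀ n ∈ D, m.Overlaps n → m = n

/-- The residuals of the redex occurrences in `D` after contraction of `u`. -/
def residualOccs (u : Rdx F ar) (D : Set (RedexOcc F ar)) : Set (RedexOcc F ar) :=
  {m | ∃ q, ⟨q, m.rule⟩ ∈ D ∧ m.pos ∈ mapPos u.rule u.pos q}

section Marking

variable {R : Set (Rule F ar)} {t : ITerm F ar} {D E : Set (RedexOcc F ar)} {u : Rdx F ar}

theorem isMarking_image_toOcc {U : Set (Rdx F ar)} (hU : ∀ u ∈ U, u.In R t)
    (hnov : ∀ u ∈ U, ∀ v ∈ U, u ≠ v → ¬ u.Overlaps v) : IsMarking R t (Rdx.toOcc '' U) := by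
  constructor
  · rintro _ ⟨u, hu, rfl⟩
    exact (hU u hu).toOcc
  · rintro _ ⟨u, hu, rfl⟩ _ ⟨v, hv, rfl⟩ h
    by_contra hne
    exact hnov u hu v hv (fun he => hne (he ▸ rfl)) (Rdx.overlaps_iff.2 h)

namespace IsMarking

theorem mono (h : IsMarking R t D) (hE : E ⊆ D) : IsMarking R t E :=
  ⟨fun m hm => h.mem_in m (hE hm), fun m hm n hn => h.eq_of_overlaps m (hE hm) n (hE hn)⟩

theorem eq_of_pos_eq (h : IsMarking R t D) {m n : RedexOcc F ar} (hm : m ∈ D) (hn : n ∈ D)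
    (hmn : m.pos = n.pos) : m = n :=
  h.eq_of_overlaps m hm n hn (RedexOcc.overlaps_of_pos_eq hmn)

theorem not_overlaps_of_mem_mapPos (hD : IsMarking R t D) (huD : u.toOcc ∈ D) {q q' : List ℕ}
    {ρ : Rule F ar} (hq : ⟨q, ρ⟩ ∈ D) (hq' : q' ∈ mapPos u.rule u.pos q) :
    ¬ RedexOcc.Overlaps ⟨q, ρ⟩ u.toOcc := by
  intro h
  obtain rfl : q = u.pos := congrArg RedexOcc.pos (hD.eq_of_overlaps _ hq _ huD h)
  exact notMem_mapPos_self hq'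

theorem append_mem_mapPos (hD : IsMarking R t D) (huD : u.toOcc ∈ D) {q q' r : List ℕ}
    {ρ : Rule F ar} (hq : ⟨q, ρ⟩ ∈ D) (hq' : q' ∈ mapPos u.rule u.pos q)
    (hr : r ∈ ρ.lhs.patPos) : q' ++ r ∈ mapPos u.rule u.pos (q ++ r) :=
  _root_.append_mem_mapPos hq'
    (RedexOcc.prefix_of_not_overlaps (hD.not_overlaps_of_mem_mapPos huD hq hq') hr)

theorem residualOccs (hR : ∀ ρ ∈ R, ρ.LeftLinear) (hD : IsMarking R t D) (hu : u.In R t)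
    (huD : u.toOcc ∈ D) : IsMarking R (u.result t) (residualOccs u D) := by
  constructor
  · rintro ⟨q', ρ⟩ ⟨q, hq, hq'⟩
    refine ⟨(hD.mem_in _ hq).1, fun r f hr => ?_⟩
    rw [hu.symAt?_result_of_mem_mapPos
      (hD.append_mem_mapPos huD hq hq' (FTerm.mem_patPos_iff.2 ⟨f, hr⟩))]
    exact (hD.mem_in _ hq).2 r f hr
  · rintro ⟨q₁', ρ₁⟩ ⟨q₁, hq₁, hq₁'⟩ ⟨q₂', ρ₂⟩ ⟨q₂, hq₂, hq₂'⟩ ⟨r₁, hr₁, r₂, hr₂, h⟩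
    have h₁ := hD.append_mem_mapPos huD hq₁ hq₁' hr₁
    have h₂ := hD.append_mem_mapPos huD hq₂ hq₂' hr₂
    dsimp only at h h₁ h₂
    rw [h] at h₁
    have he := eq_of_mem_mapPos (hR _ hu.1) h₁ h₂
    obtain ⟨rfl, rfl⟩ :=
      RedexOcc.ext_iff.1 (hD.eq_of_overlaps _ hq₁ _ hq₂ ⟨r₁, hr₁, r₂, hr₂, he⟩)
    obtain rfl := List.append_cancel_left he
    obtain rfl := List.append_cancel_right h
    rfl

end IsMarking

theorem mem_residualOccs_iff_of_mem_mapPos (hρ : u.rule.LeftLinear) {q q' : List ℕ}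
    (hq : q' ∈ mapPos u.rule u.pos q) {ρ : Rule F ar} :
    ⟨q', ρ⟩ ∈ residualOccs u D ↔ ⟨q, ρ⟩ ∈ D := by
  refine ⟨?_, fun h => ⟨q, h, hq⟩⟩
  rintro ⟨q₂, h, hq₂⟩
  rwa [eq_of_mem_mapPos hρ hq hq₂]

theorem append_notMem_residualOccs {v : List ℕ} {f : F} (D : Set (RedexOcc F ar))
    (hv : symAt? u.rule.rhs v = some (Sum.inl f)) (ρ : Rule F ar) :
    ⟨u.pos ++ v, ρ⟩ ∉ residualOccs u D := by
  rintro ⟨q, -, hq⟩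
  exact append_notMem_mapPos_of_symAt?_eq_inl hv hq

theorem image_toOcc_residuals (hR : ∀ ρ ∈ R, ρ.LeftLinear) {V : Set (Rdx F ar)}
    (hV : IsMarking R t (Rdx.toOcc '' V)) (hu : u.In R t) (huV : u ∈ V) :
    Rdx.toOcc '' residuals R u (V \ {u}) (u.result t) = residualOccs u (Rdx.toOcc '' V) := by
  ext ⟨q', ρ⟩
  constructor
  · rintro ⟨v', ⟨v, hv, hrule, hpos, -⟩, h⟩
    obtain ⟨rfl, rfl⟩ := RedexOcc.ext_iff.1 h
    exact ⟨v.pos, ⟨v, hv.1, RedexOcc.ext rfl hrule.symm⟩, hpos⟩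
  · intro h
    obtain ⟨v', hv', h'⟩ := ((hV.residualOccs hR hu ⟨u, huV, rfl⟩).mem_in _ h).exists_rdx hR
    obtain ⟨q, ⟨v, hv, hvq⟩, hq'⟩ := h
    obtain ⟨rfl, hvρ⟩ := RedexOcc.ext_iff.1 hvq
    obtain ⟨rfl, rfl⟩ := RedexOcc.ext_iff.1 h'
    refine ⟨v', ⟨v, ⟨hv, ?_⟩, hvρ.symm, hq', hv'⟩, rfl⟩
    rintro rfl
    exact notMem_mapPos_self hq'

end Marking

/-! ### Weak simulations -/

/-- `S` is a weak simulation of `M` by `N`: every start state of `M` is related to one of `N`, and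
related states remain related after a step of `M`, answered in `N` by a step with the same letter
and any number of `ε`-steps before and after it. -/
structure IsWeakSimulation {α σ τ : Type*} (M : εNFA α σ) (N : εNFA α τ) (S : σ → τ → Prop) :
    Prop where
  start : ∀ s ∈ M.start, ∃ t ∈ N.start, S s t
  step : ∀ s t o s', S s t → s' ∈ M.step s o → ∃ t' ∈ N.evalFrom {t} o.toList, S s' t'
  accept : ∀ s t, S s t → s ∈ M.accept → ∃ t' ∈ N.evalFrom {t} [], t' ∈ N.accept

section WeakSimulation

variable {α σ τ : Type*} {M : εNFA α σ} {N : εNFA α τ} {S : σ → τ → Prop}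

theorem mem_evalFrom_append {s₁ s₂ s₃ : σ} {x y : List α} (h₁ : s₂ ∈ M.evalFrom {s₁} x)
    (h₂ : s₃ ∈ M.evalFrom {s₂} y) : s₃ ∈ M.evalFrom {s₁} (x ++ y) := by
  rw [M.mem_evalFrom_iff_exists_path] at h₁ h₂ ⊢
  obtain ⟨x', rfl, hx⟩ := h₁
  obtain ⟨y', rfl, hy⟩ := h₂
  exact ⟨x' ++ y', List.reduceOption_append _ _, M.isPath_append.2 ⟨s₂, hx, hy⟩⟩

theorem mem_evalFrom_of_mem_step {s s' : σ} {o : Option α} (h : s' ∈ M.step s o) :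
    s' ∈ M.evalFrom {s} o.toList :=
  M.mem_evalFrom_iff_exists_path.2
    ⟨[o], List.reduceOption_singleton o, (εNFA.isPath_singleton M).2 h⟩

theorem mem_evalFrom_nil_self (M : εNFA α σ) (s : σ) : s ∈ M.evalFrom {s} [] :=
  M.mem_evalFrom_iff_exists_path.2 ⟨[], rfl, .nil s⟩

namespace IsWeakSimulation

theorem exists_of_isPath (hS : IsWeakSimulation M N S) {s s' : σ} {x : List (Option α)}
    (h : M.IsPath s s' x) {t : τ} (hst : S s t) :
    ∃ t' ∈ N.evalFrom {t} x.reduceOption, S s' t' := by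
  induction h generalizing t with
  | nil s => exact ⟨t, mem_evalFrom_nil_self N t, hst⟩
  | cons s₂ s₁ s₃ o x hstep _ ih =>
    obtain ⟨t₂, ht₂, hst₂⟩ := hS.step _ _ _ _ hst hstep
    obtain ⟨t₃, ht₃, hst₃⟩ := ih hst₂
    refine ⟨t₃, ?_, hst₃⟩
    rw [← List.singleton_append, List.reduceOption_append, List.reduceOption_singleton]
    exact mem_evalFrom_append ht₂ ht₃

theorem accepts_le (hS : IsWeakSimulation M N S) : M.accepts ≤ N.accepts := by
  intro x hx
  obtain ⟨s, s', x, hs, hs', rfl, hpath⟩ := M.mem_accepts_iff_exists_path.1 hx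
  obtain ⟨t, ht, hst⟩ := hS.start s hs
  obtain ⟨t₁, ht₁, hst₁⟩ := hS.exists_of_isPath hpath hst
  obtain ⟨t₂, ht₂, hacc⟩ := hS.accept _ _ hst₁ hs'
  obtain ⟨x', hx', hpath'⟩ := N.mem_evalFrom_iff_exists_path.1 (mem_evalFrom_append ht₁ ht₂)
  rw [List.append_nil] at hx'
  exact N.mem_accepts_iff_exists_path.2 ⟨t, t₂, x', ht, hacc, hx', hpath'⟩

end IsWeakSimulation

end WeakSimulation

/-! ### Reading off the result of a development -/

variable (F ar) in
/-- The places visited when the result of a development is read off: a position `q` of the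
developed term, or a position `v` in the right-hand side of the rule `ρ` of a redex occurrence
at `q`. -/
inductive ReadState : Type
  | term (q : List ℕ)
  | rhs (q : List ℕ) (ρ : Rule F ar) (v : List ℕ)

/-- The moves between the places of `t` and the right-hand sides of the redex occurrences in `D`.
Descending to the `i`-th argument has the label `i`; entering a right-hand side and returning from
one of its variables to `t` are silent. -/
inductive ReadStep (t : ITerm F ar) (D : Set (RedexOcc F ar)) :
    ReadState F ar → Option ℕ → ReadState F ar → Prop
  | enter {q ρ} : ⟨q, ρ⟩ ∈ D → ReadStep t D (.term q) none (.rhs q ρ [])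
  | termChild {q i} : (∀ ρ, ⟨q, ρ⟩ ∉ D) → (symAt? t (q ++ [i])).isSome →
      ReadStep t D (.term q) (some i) (.term (q ++ [i]))
  | leave {q ρ v x r} : symAt? ρ.rhs v = some (Sum.inr x) → r ∈ ρ.lhs.varPos x →
      ReadStep t D (.rhs q ρ v) none (.term (q ++ r))
  | rhsChild {q ρ v i} : (symAt? ρ.rhs (v ++ [i])).isSome →
      ReadStep t D (.rhs q ρ v) (some i) (.rhs q ρ (v ++ [i]))

/-- `Shows t D s a`: at the place `s` one reads the symbol `a`, rather than moving on silently. -/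
inductive Shows (t : ITerm F ar) (D : Set (RedexOcc F ar)) : ReadState F ar → F ⊕ ℕ → Prop
  | term {q a} : (∀ ρ, ⟨q, ρ⟩ ∉ D) → symAt? t q = some a → Shows t D (.term q) a
  | rhs {q ρ v f} : symAt? ρ.rhs v = some (Sum.inl f) → Shows t D (.rhs q ρ v) (Sum.inl f)

/-- The automaton that accepts the positions at which the symbol `a` is read off when the redex
occurrences in `D` are developed. -/
def readAutomaton (t : ITerm F ar) (D : Set (RedexOcc F ar)) (a : F ⊕ ℕ) :
    εNFA ℕ (ReadState F ar) where
  step s o := {s' | ReadStep t D s o s'}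
  start := {.term []}
  accept := {s | Shows t D s a}

section Shallow

variable {t : ITerm F ar} {D : Set (RedexOcc F ar)} {a : F ⊕ ℕ}

theorem εClosure_readAutomaton_term_of_unmarked {q : List ℕ} (hq : ∀ ρ, ⟨q, ρ⟩ ∉ D) :
    (readAutomaton t D a).εClosure {.term q} = {.term q} := by
  refine Set.Subset.antisymm (fun s hs => ?_) ((readAutomaton t D a).subset_εClosure _)
  induction hs with
  | base _ hs => exact hs
  | step s s' hs' _ ih =>
    obtain rfl := Set.mem_singleton_iff.1 ih
    cases hs' with
    | enter hρ => exact absurd hρ (hq _)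

theorem eval_readAutomaton_of_forall_length_lt {p : List ℕ}
    (hD : ∀ m ∈ D, p.length < m.pos.length) :
    (readAutomaton t D a).eval p = {s | s = .term p ∧ (symAt? t p).isSome} := by
  have unmarked {q : List ℕ} (hq : q.length ≤ p.length) (ρ : Rule F ar) : ⟨q, ρ⟩ ∉ D :=
    fun h => (hD _ h).not_ge hq
  induction p using List.reverseRecOn with
  | nil =>
    rw [εNFA.eval_nil]
    refine (εClosure_readAutomaton_term_of_unmarked (unmarked le_rfl)).trans ?_
    simp [ITerm.symAt?_nil]
  | append_singleton p i ih =>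
    have hp : p.length ≤ (p ++ [i]).length := by simp
    rw [εNFA.eval_append_singleton, ih (fun m hm => hp.trans_lt (hD m hm))
      fun hq => unmarked (hq.trans hp)]
    ext s
    rw [εNFA.mem_stepSet_iff]
    constructor
    · rintro ⟨_, ⟨rfl, -⟩, hs⟩
      rw [εNFA.mem_εClosure_iff_exists] at hs
      obtain ⟨s', hs', hs⟩ := hs
      cases hs' with
      | termChild _ hi =>
        rw [εClosure_readAutomaton_term_of_unmarked (unmarked le_rfl)] at hs
        exact ⟨hs, hi⟩
    · rintro ⟨rfl, hi⟩
      exact ⟨.term p, ⟨rfl, ITerm.isSome_symAt?_of_append hi⟩,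
        (readAutomaton t D a).subset_εClosure _ (ReadStep.termChild (unmarked hp) hi)⟩

theorem mem_accepts_readAutomaton_of_forall_length_lt {p : List ℕ}
    (hD : ∀ m ∈ D, p.length < m.pos.length) :
    p ∈ (readAutomaton t D a).accepts ↔ symAt? t p = some a := by
  change (∃ s ∈ (readAutomaton t D a).accept, s ∈ (readAutomaton t D a).eval p) ↔ _
  rw [eval_readAutomaton_of_forall_length_lt hD]
  constructor
  · rintro ⟨_, hs, rfl, -⟩
    cases hs with
    | term _ ha => exact ha
  · intro ha
    exact ⟨.term p, .term (fun ρ h => (hD _ h).false) ha, rfl, Option.isSome_of_eq_some ha⟩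

end Shallow

/-- Places of `t` and of `u.result t` at which the same reading continues with a move that does not
belong to the contraction of `u`. -/
inductive Settled (u : Rdx F ar) (D : Set (RedexOcc F ar)) :
    ReadState F ar → ReadState F ar → Prop
  | residual {q q'} : q' ∈ mapPos u.rule u.pos q → Settled u D (.term q) (.term q')
  | contractum {v f} : symAt? u.rule.rhs v = some (Sum.inl f) →
      Settled u D (.rhs u.pos u.rule v) (.term (u.pos ++ v))
  | rhs {q q' ρ v} : ⟨q, ρ⟩ ∈ D → q' ∈ mapPos u.rule u.pos q →
      Settled u D (.rhs q ρ v) (.rhs q' ρ v)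

/-- Places of `t` and of `u.result t` at which the same reading continues: in addition to the
settled ones, those where in `t` the contraction of `u` is about to be entered or left. -/
inductive Corresponds (u : Rdx F ar) (D : Set (RedexOcc F ar)) :
    ReadState F ar → ReadState F ar → Prop
  | settled {s s'} : Settled u D s s' → Corresponds u D s s'
  | entering : Corresponds u D (.term u.pos) (.term u.pos)
  | leaving {v x} : symAt? u.rule.rhs v = some (Sum.inr x) →
      Corresponds u D (.rhs u.pos u.rule v) (.term (u.pos ++ v))

section Contraction

variable {R : Set (Rule F ar)} {t : ITerm F ar} {D : Set (RedexOcc F ar)} {u : Rdx F ar}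
  {s s' : ReadState F ar} {a : F ⊕ ℕ}

namespace Corresponds

theorem contractum {v : List ℕ} (hv : (symAt? u.rule.rhs v).isSome) :
    Corresponds u D (.rhs u.pos u.rule v) (.term (u.pos ++ v)) := by
  obtain ⟨f | x, hv⟩ := Option.isSome_iff_exists.1 hv
  · exact .settled (.contractum hv)
  · exact .leaving hv

theorem append {q q' r : List ℕ} (hq : q' ∈ mapPos u.rule u.pos q)
    (hr : u.pos <+: q ++ r → u.pos <+: q ∨ u.pos = q ++ r) :
    Corresponds u D (.term (q ++ r)) (.term (q' ++ r)) := by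
  by_cases hp : u.pos <+: q
  · exact .settled (.residual (append_mem_mapPos hq fun _ => hp))
  · by_cases he : u.pos = q ++ r
    · rw [mapPos_of_not_prefix _ hp] at hq
      rw [Set.mem_singleton_iff.1 hq, ← he]
      exact .entering
    · exact .settled (.residual (append_mem_mapPos hq fun h => (hr h).resolve_right he))

theorem termChild {q q' : List ℕ} (hq : q' ∈ mapPos u.rule u.pos q) (i : ℕ) :
    Corresponds u D (.term (q ++ [i])) (.term (q' ++ [i])) :=
  append hq fun h => (List.prefix_concat_iff.1 h).symm

theorem leave (hD : IsMarking R t D) (huD : u.toOcc ∈ D) {q q' r : List ℕ} {x : ℕ}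
    {ρ : Rule F ar} (hρ : ⟨q, ρ⟩ ∈ D) (hq : q' ∈ mapPos u.rule u.pos q)
    (hr : r ∈ ρ.lhs.varPos x) : Corresponds u D (.term (q ++ r)) (.term (q' ++ r)) :=
  append hq (RedexOcc.prefix_or_eq_of_not_overlaps (n := u.toOcc)
    (hD.not_overlaps_of_mem_mapPos huD hρ hq)
    (Option.isSome_of_eq_some (FTerm.mem_varPos_iff.1 hr)))

theorem start : Corresponds u D (.term []) (.term []) := by
  by_cases h : u.pos = []
  · simpa only [h] using entering (u := u) (D := D)
  · exact .settled (.residual (Or.inl ⟨fun hp => h (List.prefix_nil.1 hp), rfl⟩))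

end Corresponds

namespace Settled

theorem shows_iff (hu : u.In R t) (hρ : u.rule.LeftLinear) (h : Settled u D s s') :
    Shows t D s a ↔ Shows (u.result t) (residualOccs u D) s' a := by
  cases h with
  | residual hq =>
    constructor
    · rintro ⟨hn, ha⟩
      exact .term (fun _ h => hn _ ((mem_residualOccs_iff_of_mem_mapPos hρ hq).1 h))
        ((hu.symAt?_result_of_mem_mapPos hq).trans ha)
    · rintro ⟨hn, ha⟩
      exact .term (fun _ h => hn _ ((mem_residualOccs_iff_of_mem_mapPos hρ hq).2 h))
        ((hu.symAt?_result_of_mem_mapPos hq).symm.trans ha)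
  | contractum hv =>
    have hv' := hu.symAt?_result_append_of_eq_inl hv
    constructor
    · rintro (_ | ha)
      rw [Option.some.inj (ha.symm.trans hv)]
      exact .term (append_notMem_residualOccs D hv) hv'
    · rintro ⟨-, ha⟩
      rw [Option.some.inj (ha.symm.trans hv')]
      exact .rhs hv
  | rhs =>
    constructor <;> rintro (_ | ha) <;> exact .rhs ha

theorem exists_readStep_result (hD : IsMarking R t D) (hu : u.In R t) (huD : u.toOcc ∈ D)
    (hρ : u.rule.LeftLinear) (h : Settled u D s s') {o : Option ℕ} {r : ReadState F ar}
    (hr : ReadStep t D s o r) :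
    ∃ r', ReadStep (u.result t) (residualOccs u D) s' o r' ∧ Corresponds u D r r' := by
  cases h with
  | residual hq =>
    cases hr with
    | enter hm =>
      exact ⟨_, .enter ((mem_residualOccs_iff_of_mem_mapPos hρ hq).2 hm),
        .settled (.rhs hm hq)⟩
    | termChild hn hi =>
      have hi' := (ITerm.isSome_symAt?_concat_congr (hu.symAt?_result_of_mem_mapPos hq) _).2 hi
      exact ⟨_, .termChild (fun _ h => hn _ ((mem_residualOccs_iff_of_mem_mapPos hρ hq).1 h)) hi',
        .termChild hq _⟩
  | contractum hv =>
    cases hr with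
    | leave hx => cases hv.symm.trans hx
    | rhsChild hi =>
      have hi' := (ITerm.isSome_symAt?_concat_congr
        ((hu.symAt?_result_append_of_eq_inl hv).trans hv.symm) _).2 hi
      refine ⟨_, .termChild (append_notMem_residualOccs D hv) hi', ?_⟩
      rw [List.append_assoc]
      exact .contractum hi
  | rhs hm hq =>
    cases hr with
    | leave hx hr => exact ⟨_, .leave hx hr, .leave hD huD hm hq hr⟩
    | rhsChild hi => exact ⟨_, .rhsChild hi, .settled (.rhs hm hq)⟩

theorem exists_readStep_of_result (hD : IsMarking R t D) (hu : u.In R t) (huD : u.toOcc ∈ D)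
    (hρ : u.rule.LeftLinear) (h : Settled u D s s') {o : Option ℕ} {r' : ReadState F ar}
    (hr : ReadStep (u.result t) (residualOccs u D) s' o r') :
    ∃ r, ReadStep t D s o r ∧ Corresponds u D r r' := by
  cases h with
  | residual hq =>
    cases hr with
    | enter hm =>
      replace hm := (mem_residualOccs_iff_of_mem_mapPos hρ hq).1 hm
      exact ⟨_, .enter hm, .settled (.rhs hm hq)⟩
    | termChild hn hi =>
      have hi' := (ITerm.isSome_symAt?_concat_congr (hu.symAt?_result_of_mem_mapPos hq) _).1 hi
      exact ⟨_, .termChild (fun _ h => hn _ ((mem_residualOccs_iff_of_mem_mapPos hρ hq).2 h)) hi',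
        .termChild hq _⟩
  | contractum hv =>
    cases hr with
    | enter hm => exact absurd hm (append_notMem_residualOccs D hv _)
    | termChild _ hi =>
      have hi' := (ITerm.isSome_symAt?_concat_congr
        ((hu.symAt?_result_append_of_eq_inl hv).trans hv.symm) _).1 hi
      refine ⟨_, .rhsChild hi', ?_⟩
      rw [List.append_assoc]
      exact .contractum hi'
  | rhs hm hq =>
    cases hr with
    | leave hx hr => exact ⟨_, .leave hx hr, .leave hD huD hm hq hr⟩
    | rhsChild hi => exact ⟨_, .rhsChild hi, .settled (.rhs hm hq)⟩

end Settled

theorem Corresponds.exists_settled (huD : u.toOcc ∈ D) (h : Corresponds u D s s') :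
    ∃ s₀ ∈ (readAutomaton t D a).evalFrom {s} [], Settled u D s₀ s' := by
  have hleaving {v : List ℕ} {x : ℕ} (hv : symAt? u.rule.rhs v = some (Sum.inr x)) :
      ∃ s₀ ∈ (readAutomaton t D a).evalFrom {.rhs u.pos u.rule v} [],
        Settled u D s₀ (.term (u.pos ++ v)) := by
    obtain ⟨r, hr⟩ := u.rule.nonempty_varPos_lhs hv
    exact ⟨_, mem_evalFrom_of_mem_step (o := none) (ReadStep.leave hv hr),
      .residual (append_mem_mapPos_of_symAt?_eq_inr hr hv)⟩
  cases h with
  | settled h => exact ⟨s, mem_evalFrom_nil_self _ _, h⟩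
  | leaving hv => exact hleaving hv
  | entering =>
    have henter : .rhs u.pos u.rule [] ∈ (readAutomaton t D a).evalFrom {.term u.pos} [] :=
      mem_evalFrom_of_mem_step (o := none) (ReadStep.enter huD)
    obtain ⟨f | x, hnil⟩ : ∃ b, symAt? u.rule.rhs [] = some b := ⟨_, ITerm.symAt?_nil _⟩
    · exact ⟨_, henter, by simpa using Settled.contractum (u := u) (D := D) hnil⟩
    · obtain ⟨s₀, hs₀, h⟩ := hleaving hnil
      rw [List.append_nil] at h
      exact ⟨s₀, mem_evalFrom_append henter hs₀, h⟩

theorem isWeakSimulation_corresponds (hD : IsMarking R t D) (hu : u.In R t) (huD : u.toOcc ∈ D)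
    (hρ : u.rule.LeftLinear) :
    IsWeakSimulation (readAutomaton t D a) (readAutomaton (u.result t) (residualOccs u D) a)
      (Corresponds u D) where
  start := by
    rintro _ rfl
    exact ⟨_, rfl, .start⟩
  step := by
    rintro s s' o r (h | _ | hv) hr
    · obtain ⟨r', hr', hrr'⟩ := h.exists_readStep_result hD hu huD hρ hr
      exact ⟨r', mem_evalFrom_of_mem_step hr', hrr'⟩
    · cases hr with
      | enter hm =>
        obtain rfl : u.rule = _ := congrArg RedexOcc.rule (hD.eq_of_pos_eq huD hm rfl)
        refine ⟨_, mem_evalFrom_nil_self _ _, ?_⟩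
        simpa using Corresponds.contractum (u := u) (D := D) (v := []) rfl
      | termChild hn => exact absurd huD (hn _)
    · cases hr with
      | leave hx hr =>
        obtain rfl := Sum.inr.inj (Option.some.inj (hx.symm.trans hv))
        exact ⟨_, mem_evalFrom_nil_self _ _,
          .settled (.residual (append_mem_mapPos_of_symAt?_eq_inr hr hv))⟩
      | rhsChild hi =>
        obtain ⟨f, hf⟩ := ITerm.exists_symAt?_eq_inl_of_append hi (List.cons_ne_nil _ _)
        cases hf.symm.trans hv
  accept := by
    rintro s s' (h | _ | hv) ha
    · exact ⟨s', mem_evalFrom_nil_self _ _, (h.shows_iff hu hρ).1 ha⟩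
    · cases ha with
      | term hn => exact absurd huD (hn _)
    · cases ha with
      | rhs hf => cases hf.symm.trans hv

theorem isWeakSimulation_flip_corresponds (hD : IsMarking R t D) (hu : u.In R t)
    (huD : u.toOcc ∈ D) (hρ : u.rule.LeftLinear) :
    IsWeakSimulation (readAutomaton (u.result t) (residualOccs u D) a) (readAutomaton t D a)
      (flip (Corresponds u D)) where
  start := by
    rintro _ rfl
    exact ⟨_, rfl, .start⟩
  step := by
    intro s' s o r' (h : Corresponds u D s s') hr'
    obtain ⟨s₀, hs₀, h₀⟩ := h.exists_settled (t := t) (a := a) huD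
    obtain ⟨r, hr, hrr'⟩ := h₀.exists_readStep_of_result hD hu huD hρ hr'
    exact ⟨r, mem_evalFrom_append hs₀ (mem_evalFrom_of_mem_step hr), hrr'⟩
  accept := by
    intro s' s (h : Corresponds u D s s') ha
    obtain ⟨s₀, hs₀, h₀⟩ := h.exists_settled (t := t) (a := a) huD
    exact ⟨s₀, hs₀, (h₀.shows_iff hu hρ).2 ha⟩

theorem accepts_readAutomaton_result (hD : IsMarking R t D) (hu : u.In R t) (huD : u.toOcc ∈ D)
    (hρ : u.rule.LeftLinear) (a : F ⊕ ℕ) :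
    (readAutomaton (u.result t) (residualOccs u D) a).accepts = (readAutomaton t D a).accepts :=
  le_antisymm (isWeakSimulation_flip_corresponds hD hu huD hρ).accepts_le
    (isWeakSimulation_corresponds hD hu huD hρ).accepts_le

theorem CompDev.symAt?_eq_some_iff (hR : ∀ ρ ∈ R, ρ.LeftLinear) {U : Set (Rdx F ar)}
    (hU : IsMarking R t (Rdx.toOcc '' U)) {s : ITerm F ar} (h : CompDev R t U s) {p : List ℕ} :
    symAt? s p = some a ↔ p ∈ (readAutomaton t (Rdx.toOcc '' U) a).accepts := by
  obtain ⟨g, Us, rfl, rfl, hstep, hdepth, hconv⟩ := h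
  have invariant (n : ℕ) : IsMarking R (g n) (Rdx.toOcc '' Us n) ∧
      (readAutomaton (g n) (Rdx.toOcc '' Us n) a).accepts =
        (readAutomaton (g 0) (Rdx.toOcc '' Us 0) a).accepts := by
    induction n with
    | zero => exact ⟨hU, rfl⟩
    | succ n ih =>
      rcases hstep n with ⟨h₀, hg, h₁⟩ | ⟨u, huU, hu, hg, hUs⟩
      · rw [hg, h₁, ← h₀]
        exact ih
      · have huD : u.toOcc ∈ Rdx.toOcc '' Us n := ⟨u, huU, rfl⟩
        rw [hUs, hg, image_toOcc_residuals hR ih.1 hu huU,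
          accepts_readAutomaton_result ih.1 hu huD (hR _ hu.1)]
        exact ⟨ih.1.residualOccs hR hu huD, ih.2⟩
  obtain ⟨N₁, hN₁⟩ := hdepth (p.length + 1)
  obtain ⟨N₂, hN₂⟩ := hconv (p.length + 1)
  have deep : ∀ m ∈ Rdx.toOcc '' Us (max N₁ N₂), p.length < m.pos.length := by
    rintro _ ⟨u, hu, rfl⟩
    exact hN₁ _ (le_max_left N₁ N₂) u hu
  rw [← hN₂ _ (le_max_right N₁ N₂) p (Nat.lt_succ_self _), ← (invariant (max N₁ N₂)).2,
    mem_accepts_readAutomaton_of_forall_length_lt deep]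

end Contraction

/-! ### Y-clusters -/

/-- Overlap of members of `K`, the elementary step of an overlap chain inside `K`. -/
def OverlapsWithin (K : Set (RedexOcc F ar)) (m n : RedexOcc F ar) : Prop :=
  m ∈ K ∧ n ∈ K ∧ m.Overlaps n

/-- A Y-cluster of `t`: a set of redex occurrences of `t` connected by overlaps, two of which are
at disjoint positions. Its members are occurrences of Y-redexes. -/
structure IsYCluster (R : Set (Rule F ar)) (t : ITerm F ar) (K : Set (RedexOcc F ar)) : Prop where
  mem_in : ∀ m ∈ K, m.In R t
  connected : ∀ m ∈ K, ∀ n ∈ K, Relation.ReflTransGen (OverlapsWithin K) m n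
  exists_disjPos : ∃ m ∈ K, ∃ n ∈ K, DisjPos m.pos n.pos

/-- The redex occurrences that overlap no member of `K`. -/
def avoiding (K : Set (RedexOcc F ar)) : Set (RedexOcc F ar) :=
  {m | ∀ k ∈ K, ¬ k.Overlaps m}

section OverlapChains

variable {R : Set (Rule F ar)} {t : ITerm F ar} {K L : Set (RedexOcc F ar)}

theorem OverlapsWithin.mono (h : K ⊆ L) : OverlapsWithin K ≤ OverlapsWithin L :=
  fun _ _ ⟨hm, hn, hmn⟩ => ⟨h hm, h hn, hmn⟩

instance OverlapsWithin.stdSymm : Std.Symm (OverlapsWithin K) where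
  symm _ _ := fun ⟨hm, hn, hmn⟩ => ⟨hn, hm, hmn.symm⟩

theorem exists_finite_connected {u v : Rdx F ar} (hu : u.In R t)
    (h : Relation.ReflTransGen (OverlapIn R t) u v) :
    ∃ K : Set (RedexOcc F ar), K.Finite ∧ (∀ k ∈ K, k.In R t) ∧ u.toOcc ∈ K ∧ v.toOcc ∈ K ∧
      ∀ k ∈ K, Relation.ReflTransGen (OverlapsWithin K) u.toOcc k := by
  induction h with
  | refl => exact ⟨{u.toOcc}, by simp [hu.toOcc, Relation.ReflTransGen.refl]⟩
  | @tail v w _ hvw ih =>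
    obtain ⟨K, hfin, hred, huK, hvK, hconn⟩ := ih
    have hsub := Set.subset_insert w.toOcc K
    refine ⟨insert w.toOcc K, hfin.insert _, ?_, hsub huK, Set.mem_insert _ _, ?_⟩
    · rintro k (rfl | hk)
      · exact hvw.2.1.toOcc
      · exact hred k hk
    · rintro k (rfl | hk)
      · exact (Relation.ReflTransGen.mono (OverlapsWithin.mono hsub) _ _ (hconn _ hvK)).tail
          ⟨hsub hvK, Set.mem_insert _ _, Rdx.overlaps_iff.1 hvw.2.2⟩
      · exact Relation.ReflTransGen.mono (OverlapsWithin.mono hsub) _ _ (hconn k hk)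

theorem YRedex.exists_isYCluster {u : Rdx F ar} (h : YRedex R t u) :
    ∃ K : Set (RedexOcc F ar), K.Finite ∧ IsYCluster R t K ∧ u.toOcc ∈ K := by
  obtain ⟨hu, v₁, v₂, -, -, h₁, h₂, hdisj⟩ := h
  obtain ⟨K₁, hfin₁, hred₁, hu₁, hv₁, hconn₁⟩ := exists_finite_connected hu h₁
  obtain ⟨K₂, hfin₂, hred₂, -, hv₂, hconn₂⟩ := exists_finite_connected hu h₂
  have hconn : ∀ k ∈ K₁ ∪ K₂, Relation.ReflTransGen (OverlapsWithin (K₁ ∪ K₂)) u.toOcc k := by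
    rintro k (hk | hk)
    · exact Relation.ReflTransGen.mono
        (OverlapsWithin.mono Set.subset_union_left) _ _ (hconn₁ k hk)
    · exact Relation.ReflTransGen.mono
        (OverlapsWithin.mono Set.subset_union_right) _ _ (hconn₂ k hk)
  refine ⟨K₁ ∪ K₂, hfin₁.union hfin₂, ⟨?_, ?_, _, Or.inl hv₁, _, Or.inr hv₂, hdisj⟩, Or.inl hu₁⟩
  · rintro k (hk | hk)
    · exact hred₁ k hk
    · exact hred₂ k hk
  · exact fun m hm n hn => (symm (hconn m hm)).trans (hconn n hn)

theorem WeaklyOrthogonal.result_eq_of_connected (hR : WeaklyOrthogonal R)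
    (hK : ∀ k ∈ K, k.In R t) {u v : Rdx F ar} (hu : u.In R t) (hv : v.In R t)
    (h : Relation.ReflTransGen (OverlapsWithin K) u.toOcc v.toOcc) : u.result t = v.result t := by
  generalize hm : u.toOcc = m at h
  induction h using Relation.ReflTransGen.head_induction_on generalizing u with
  | refl =>
    exact hR.2 t u v hu hv
      (Rdx.overlaps_iff.2 (RedexOcc.overlaps_of_pos_eq (congrArg RedexOcc.pos hm)))
  | head hmk _ ih =>
    obtain ⟨w, hw, rfl⟩ := (hK _ hmk.2.1).exists_rdx hR.1
    exact (hR.2 t u w hu hw (Rdx.overlaps_iff.2 (hm ▸ hmk.2.2))).trans (ih hw rfl)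

end OverlapChains

namespace IsYCluster

variable {R : Set (Rule F ar)} {t : ITerm F ar} {K D : Set (RedexOcc F ar)} {u : Rdx F ar}
  {m n k : RedexOcc F ar} {q q' : List ℕ}

theorem insert_of_overlaps (hK : IsYCluster R t K) (hm : m.In R t) (hk : k ∈ K)
    (hkm : k.Overlaps m) : IsYCluster R t (insert m K) := by
  have hsub := Set.subset_insert m K
  have hconn : ∀ n ∈ insert m K, Relation.ReflTransGen (OverlapsWithin (insert m K)) k n := by
    rintro n (rfl | hn)
    · exact .single ⟨hsub hk, Set.mem_insert _ _, hkm⟩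
    · exact Relation.ReflTransGen.mono (OverlapsWithin.mono hsub) _ _ (hK.connected k hk n hn)
  obtain ⟨a, ha, b, hb, hab⟩ := hK.exists_disjPos
  refine ⟨?_, fun a ha b hb => (symm (hconn a ha)).trans (hconn b hb),
    a, hsub ha, b, hsub hb, hab⟩
  rintro a (rfl | ha)
  · exact hm
  · exact hK.mem_in a ha

theorem result_eq_self (hK : IsYCluster R t K) (hR : WeaklyOrthogonal R) (hu : u.In R t)
    (huK : u.toOcc ∈ K) : u.result t = t := by
  obtain ⟨m, hm, n, hn, hmn⟩ := hK.exists_disjPos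
  obtain ⟨v, hv, rfl⟩ := (hK.mem_in m hm).exists_rdx hR.1
  obtain ⟨w, hw, rfl⟩ := (hK.mem_in n hn).exists_rdx hR.1
  have hresv := hR.result_eq_of_connected hK.mem_in hu hv (hK.connected _ huK _ hm)
  have hresw := hR.result_eq_of_connected hK.mem_in hu hw (hK.connected _ huK _ hn)
  refine ITerm.ext_symAt? fun p => ?_
  by_cases hvp : v.pos <+: p
  · have hwp : ¬ w.pos <+: p := fun hwp =>
      (List.prefix_or_prefix_of_prefix hvp hwp).elim hmn.1 hmn.2
    rw [hresw, w.symAt?_result_of_not_prefix t hwp]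
  · rw [hresv, v.symAt?_result_of_not_prefix t hvp]

theorem not_prefix_append (hK : IsYCluster R t K) (hm : m ∈ K) (hn : n ∈ avoiding K)
    (hmn : m.pos <+: n.pos) (hk : k ∈ K) {r : List ℕ} (hr : r ∈ k.rule.lhs.patPos) :
    ¬ n.pos <+: k.pos ++ r := by
  suffices h : ¬ n.pos <+: k.pos from
    fun h' => h (RedexOcc.prefix_of_not_overlaps (hn k hk) hr h')
  clear hr
  induction hK.connected m hm k hk with
  | refl =>
    intro h
    exact hn m hm (RedexOcc.overlaps_of_pos_eq (hmn.eq_of_length_le h.length_le))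
  | @tail k k' _ hkk' ih =>
    intro h
    obtain ⟨hk, -, r, hr, _, _, he⟩ := hkk'
    exact ih hk (RedexOcc.prefix_of_not_overlaps (hn k hk) hr
      (he ▸ h.trans (List.prefix_append _ _)))

theorem replaceAt (hK : IsYCluster R t K) (hm : m ∈ K) (hn : n ∈ avoiding K)
    (hmn : m.pos <+: n.pos) (s : ITerm F ar) : IsYCluster R (replaceAt t n.pos s) K := by
  refine ⟨fun k hk => ⟨(hK.mem_in k hk).1, fun r f hr => ?_⟩, hK.connected, hK.exists_disjPos⟩
  rw [ITerm.symAt?_replaceAt_of_not_prefix _ _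
    (hK.not_prefix_append hm hn hmn hk (FTerm.mem_patPos_iff.2 ⟨f, hr⟩))]
  exact (hK.mem_in k hk).2 r f hr

theorem symAt?_eq_of_mem_mapPos (hK : IsYCluster R t K) (hR : WeaklyOrthogonal R) (hm : m ∈ K)
    (hq : q' ∈ mapPos m.rule m.pos q) : symAt? t q' = symAt? t q := by
  obtain ⟨u, hu, rfl⟩ := (hK.mem_in m hm).exists_rdx hR.1
  rw [← hu.symAt?_result_of_mem_mapPos hq, hK.result_eq_self hR hu hm]

theorem exists_mem_mapPos_of_symAt?_eq_inr (hK : IsYCluster R t K) (hR : WeaklyOrthogonal R)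
    (hm : m ∈ K) {x : ℕ} (hq : symAt? t q = some (Sum.inr x)) :
    ∃ q₀, q ∈ mapPos m.rule m.pos q₀ := by
  obtain ⟨u, hu, rfl⟩ := (hK.mem_in m hm).exists_rdx hR.1
  rw [← hK.result_eq_self hR hu hm] at hq
  refine (hu.mem_mapPos_or_eq_append (Option.isSome_of_eq_some hq)).resolve_right ?_
  rintro ⟨v, f, rfl, hv⟩
  simp [hu.symAt?_result_append_of_eq_inl hv] at hq

theorem mapPos_eq_singleton (hK : IsYCluster R t K) (hR : WeaklyOrthogonal R) (hm : m ∈ K)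
    (hnt : (symAt? t n.pos).isSome) (hn : n ∈ avoiding K) (hmn : m.pos <+: n.pos) :
    mapPos m.rule m.pos n.pos = {n.pos} := by
  have hcluster (z : ℕ) := hK.replaceAt hm hn hmn (FTerm.var z).toI
  have hvar (z : ℕ) := ITerm.symAt?_replaceAt_var hnt z
  ext q'
  constructor
  · intro hq'
    exact ITerm.eq_of_symAt?_replaceAt_var hnt fun z =>
      ((hcluster z).symAt?_eq_of_mem_mapPos hR hm hq').trans (hvar z)
  · rintro rfl
    obtain ⟨q₀, hq₀⟩ := (hcluster 0).exists_mem_mapPos_of_symAt?_eq_inr hR hm (hvar 0)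
    obtain rfl : q₀ = n.pos := ITerm.eq_of_symAt?_replaceAt_var hnt fun z =>
      ((hcluster z).symAt?_eq_of_mem_mapPos hR hm hq₀).symm.trans (hvar z)
    exact hq₀

theorem residualOccs_eq (hK : IsYCluster R t K) (hR : WeaklyOrthogonal R) (hD : IsMarking R t D)
    (huK : u.toOcc ∈ K)
    (hinner : ∀ n ∈ D, n ≠ u.toOcc → u.pos <+: n.pos → n ∈ avoiding K) :
    residualOccs u D = D \ {u.toOcc} := by
  have hmap {q : List ℕ} {ρ : Rule F ar} (hq : ⟨q, ρ⟩ ∈ D) (hne : ⟨q, ρ⟩ ≠ u.toOcc) :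
      mapPos u.rule u.pos q = {q} := by
    by_cases hp : u.pos <+: q
    · exact hK.mapPos_eq_singleton (n := ⟨q, ρ⟩) hR huK (hD.mem_in _ hq).isSome_symAt?
        (hinner _ hq hne hp) hp
    · exact mapPos_of_not_prefix u.rule hp
  ext ⟨q', ρ⟩
  constructor
  · rintro ⟨q, hq, hq'⟩
    have hne : ⟨q, ρ⟩ ≠ u.toOcc := by
      intro he
      obtain rfl : q = u.pos := congrArg RedexOcc.pos he
      exact notMem_mapPos_self hq'
    rw [hmap hq hne] at hq'
    obtain rfl : q' = q := hq'
    exact ⟨hq, hne⟩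
  · rintro ⟨hq, hne⟩
    exact ⟨q', hq, (hmap hq hne).symm ▸ rfl⟩

theorem accepts_diff_singleton (hK : IsYCluster R t K) (hR : WeaklyOrthogonal R)
    (hD : IsMarking R t D) (hmD : m ∈ D) (hmK : m ∈ K)
    (hinner : ∀ n ∈ D, n ≠ m → m.pos <+: n.pos → n ∈ avoiding K) (a : F ⊕ ℕ) :
    (readAutomaton t (D \ {m}) a).accepts = (readAutomaton t D a).accepts := by
  obtain ⟨u, hu, rfl⟩ := (hD.mem_in m hmD).exists_rdx hR.1
  rw [← accepts_readAutomaton_result hD hu hmD (hR.1 _ hu.1), hK.result_eq_self hR hu hmK,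
    hK.residualOccs_eq hR hD hmK hinner]

end IsYCluster

section Avoiding

variable {R : Set (Rule F ar)} {t : ITerm F ar} {K D : Set (RedexOcc F ar)}

theorem IsMarking.finite_diff_avoiding (hD : IsMarking R t D) (hK : K.Finite) :
    (D \ avoiding K).Finite := by
  have hfin : (⋃ k ∈ K, ⋃ r ∈ k.rule.lhs.patPos,
      {m ∈ D | ∃ r' ∈ m.rule.lhs.patPos, k.pos ++ r = m.pos ++ r'}).Finite := by
    refine hK.biUnion fun k _ => k.rule.lhs.finite_patPos.biUnion fun r _ => ?_
    refine Set.Subsingleton.finite ?_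
    rintro m ⟨hm, a, ha, hma⟩ n ⟨hn, b, hb, hnb⟩
    exact hD.eq_of_overlaps m hm n hn ⟨a, ha, b, hb, hma.symm.trans hnb⟩
  refine hfin.subset fun m ⟨hmD, hm⟩ => ?_
  simp only [avoiding, Set.mem_ofPred_eq, not_forall, not_not] at hm
  obtain ⟨k, hk, r, hr, h⟩ := hm
  simp only [Set.mem_iUnion]
  exact ⟨k, hk, r, hr, hmD, h⟩

theorem IsMarking.exists_innermost (hD : IsMarking R t D) (hK : K.Finite)
    (h : (D \ avoiding K).Nonempty) :
    ∃ m ∈ D \ avoiding K, ∀ n ∈ D, n ≠ m → m.pos <+: n.pos → n ∈ avoiding (insert m K) := by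
  obtain ⟨m, hm, hmax⟩ :=
    Set.exists_max_image _ (fun m => m.pos.length) (hD.finite_diff_avoiding hK) h
  refine ⟨m, hm, fun n hn hne hmn => ?_⟩
  rintro k (rfl | hk) hov
  · exact hne (hD.eq_of_overlaps _ hm.1 n hn hov).symm
  · have hle := hmax n ⟨hn, fun hn' => hn' k hk hov⟩
    exact hne (hD.eq_of_pos_eq hm.1 hn (hmn.eq_of_length_le hle)).symm

theorem IsYCluster.accepts_inter_avoiding (hK : IsYCluster R t K) (hfin : K.Finite)
    (hR : WeaklyOrthogonal R) (hD : IsMarking R t D) (a : F ⊕ ℕ) :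
    (readAutomaton t (D ∩ avoiding K) a).accepts = (readAutomaton t D a).accepts := by
  induction hc : (D \ avoiding K).ncard using Nat.strong_induction_on generalizing D with
  | _ c ih =>
    rcases (D \ avoiding K).eq_empty_or_nonempty with hempty | hne
    · rw [Set.inter_eq_left.2 (Set.sdiff_eq_empty.1 hempty)]
    · obtain ⟨m, ⟨hmD, hm⟩, hinner⟩ := hD.exists_innermost hfin hne
      obtain ⟨k, hk, hkm⟩ : ∃ k ∈ K, k.Overlaps m := by simpa [avoiding] using hm
      have hK' := hK.insert_of_overlaps (hD.mem_in m hmD) hk hkm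
      have hlt : ((D \ {m}) \ avoiding K).ncard < c :=
        hc ▸ Set.ncard_lt_ncard ⟨Set.sdiff_subset_sdiff_left Set.sdiff_subset,
          fun h => (h ⟨hmD, hm⟩).1.2 rfl⟩ (hD.finite_diff_avoiding hfin)
      have hinter : (D \ {m}) ∩ avoiding K = D ∩ avoiding K := by
        rw [Set.sdiff_inter_right_comm, Set.sdiff_singleton_eq_self fun h => hm h.2]
      rw [← hinter, ih _ hlt (hD.mono Set.sdiff_subset) rfl,
        hK'.accepts_diff_singleton hR hD hmD (Set.mem_insert _ _) hinner]

end Avoiding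

/-- in a weakly orthogonal TRS, for a set `U` of pairwise
non-overlapping redexes of `t` and a Y-redex `u₀ ∈ U`, complete developments
of `U` and of `U \ {u₀}` result in the same term. -/
theorem statement16 {F : Type} {ar : F → ℕ} (R : Set (Rule F ar))
    (hWO : WeaklyOrthogonal R) (t : ITerm F ar) (U : Set (Rdx F ar))
    (hU : ∀ u ∈ U, u.In R t)
    (hnov : ∀ u ∈ U, ∀ v ∈ U, u ≠ v → ¬ u.Overlaps v)
    (u₀ : Rdx F ar) (hu₀ : u₀ ∈ U) (hY : YRedex R t u₀)
    (s s' : ITerm F ar)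
    (h : CompDev R t U s) (h' : CompDev R t (U \ {u₀}) s') :
    s = s' := by
  have hD := isMarking_image_toOcc hU hnov
  have hD' : IsMarking R t (Rdx.toOcc '' (U \ {u₀})) := hD.mono (Set.image_mono Set.sdiff_subset)
  obtain ⟨K, hfin, hK, hu₀K⟩ := hY.exists_isYCluster
  have avoiding_eq : Rdx.toOcc '' (U \ {u₀}) ∩ avoiding K = Rdx.toOcc '' U ∩ avoiding K := by
    refine (Set.inter_subset_inter_left _ (Set.image_mono Set.sdiff_subset)).antisymm ?_
    rintro _ ⟨⟨u, hu, rfl⟩, hav⟩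
    refine ⟨⟨u, ⟨hu, ?_⟩, rfl⟩, hav⟩
    rintro rfl
    exact hav _ hu₀K (RedexOcc.overlaps_of_pos_eq rfl)
  refine ITerm.ext_symAt? fun p => Option.ext fun a => ?_
  rw [h.symAt?_eq_some_iff hWO.1 hD, h'.symAt?_eq_some_iff hWO.1 hD',
    ← hK.accepts_inter_avoiding hfin hWO hD, ← hK.accepts_inter_avoiding hfin hWO hD', avoiding_eq]
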